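/- arXiv:2512.14371 — 2 statements merged into one kernel-verified Lean document; each statement's English description precedes it below -/
import Mathlib

section
/- For every uncountable cardinal κ ≤ 𝔠 there exists a family of 2^κ incomparable, totally pathwise disconnected, first countable linearly ordered continua, each of weight κ. -/
/-!
A first countable, totally pathwise disconnected ordered continuum is made to remember a subset of
`ω₁` up to nonstationary sets, and `κ` such gadgets are strung together.

**One gadget.** For `S ⊆ ω₁`, let `G S` be the dense order obtained from eventually zero real
sequences, with entries in `ℚ` or in a fixed `ω₁`-sequence of irrationals and ordered
lexicographically, by adding for each `β ∈ S` a ladder `e β` enumerating the irrationals of index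
below `β`, and by inserting a copy of the original order at each point. Its Dedekind completion
`XG S` is the union, up to closure, of an increasing continuous `ω₁`-chain of countable sets
`MX S δ`. An index `δ` is *bad* for such a filtration if some point off the closure of stage `δ` is
joined to stage `δ` by intervals avoiding the closure of any prescribed earlier stage. The ladders
make every `δ ∈ S` bad (`X_bad`), and no limit `δ ∉ S` is bad (`X_not_bad`). In first countable
ordered continua any two filtrations are interleaved at almost all indices, and a continuous
injection is open at interior points, so it preserves badness at almost all indices
(`bad_transfer`). Hence a continuous injection `XG S → XG T` forces `S \ T` to be nonstationary
(`thin_of_injection`). Splitting stationary sets repeatedly gives `2^ℕ` sets with pairwise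
stationary differences (`exists_family`).

**The family.** Let `K` be a set of reals of size `κ`, and give each `k ∈ K` two codes among these
sets, all distinct. For `i ⊆ K` the space `X i` is the completion of the lexicographic sum over
`K × ℚ` of gadgets, the gadget at `(k, q)` carrying the first or second code of `k` according to
whether `k ∈ i`. Suppose `X i` embeds in `X j` and `k` lies in exactly one of `i` and `j`. The image
of the cell `(k, 0)` is an interval of `X j` which is contained in a cell or contains a cell
(`cell_dichotomy`). Either way there is a continuous injection between gadgets with different codes,
a contradiction.

**The other properties.** Countable cofinalities in real sequences make the spaces first countable
(`firstCountable_cut`). Each interval contains uncountably many disjoint ones, which excludes paths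
(`totallyPathDisc_cut`). The sum has `κ` elements and `κ` cells, so the weight is `κ`.
-/

universe u

open Cardinal Topology

/-- The weight of a topological space: the least cardinality of a basis for its topology. -/
noncomputable def wt (X : Type u) [TopologicalSpace X] : Cardinal.{u} :=
  sInf { c : Cardinal.{u} | ∃ B : Set (Set X), TopologicalSpace.IsTopologicalBasis B ∧ #B = c }

/-- A linearly ordered topological space: the topology is the order topology of some
linear order. -/
def IsLOTS (X : Type u) [t : TopologicalSpace X] : Prop :=
  ∃ l : LinearOrder X, @OrderTopology X t l.toPartialOrder.toPreorder

/-- A continuum: a compact connected Hausdorff space with more than one point. -/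
def IsContinuum (X : Type u) [TopologicalSpace X] : Prop :=
  CompactSpace X ∧ ConnectedSpace X ∧ T2Space X ∧ Nontrivial X

/-- Totally pathwise disconnected: every path component is a singleton. -/
def TotallyPathDisc (X : Type u) [TopologicalSpace X] : Prop :=
  ∀ x : X, pathComponent x = {x}

/-- A family of spaces is incomparable if no member embeds into another member. -/
def IncompFamily {ι : Type u} (X : ι → TopCat.{u}) : Prop :=
  ∀ i j : ι, i ≠ j → ∀ f : ↥(X i) → ↥(X j), ¬ IsEmbedding f

namespace OrdCont

open Set

/-! ### A σ-ideal on `ω₁` -/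

/-- The well-order of type `ω₁`. -/
abbrev W : Type := (Cardinal.aleph 1).ord.ToType

lemma countable_Iio (w : W) : (Iio w).Countable := by
  rw [← Cardinal.le_aleph0_iff_set_countable, ← Order.lt_succ_iff, Cardinal.succ_aleph0]
  simpa using Cardinal.mk_Iio_lt w (by simp)

lemma mk_W : #W = Cardinal.aleph 1 := by
  simp

instance : Uncountable W := by
  rw [← Cardinal.aleph0_lt_mk_iff, mk_W]; exact Cardinal.aleph0_lt_aleph_one

lemma exists_bound {s : Set W} (hs : s.Countable) : ∃ b, ∀ a ∈ s, a < b := by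
  by_contra! h
  have : (univ : Set W) ⊆ ⋃ a ∈ s, (insert a (Iio a)) := by
    intro b _
    obtain ⟨a, ha, hab⟩ := h b
    simp only [mem_iUnion]
    exact ⟨a, ha, hab.eq_or_lt.imp id id⟩
  exact not_countable_univ ((hs.biUnion fun a _ => (countable_Iio a).insert a).mono this)

/-- `δ` is nonzero and closed under `g`. -/
def Cl (g : W → W) (δ : W) : Prop := (∃ α, α < δ) ∧ ∀ α < δ, g α < δ

/-- The sets missing all nonzero points closed under some `g : ω₁ → ω₁`; these are exactly the
nonstationary sets. -/
def Thin (S : Set W) : Prop := ∃ g : W → W, ∀ δ ∈ S, ¬ Cl g δ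

lemma Thin.mono {S T : Set W} (h : S ⊆ T) : Thin T → Thin S :=
  fun ⟨g, hg⟩ => ⟨g, fun δ hδ => hg δ (h hδ)⟩

lemma Thin.iUnion {S : ℕ → Set W} (h : ∀ n, Thin (S n)) : Thin (⋃ n, S n) := by
  choose g hg using h
  have : ∀ α, ∃ b, ∀ n, g n α < b := fun α => by
    obtain ⟨b, hb⟩ := exists_bound (countable_range fun n => g n α)
    exact ⟨b, fun n => hb _ ⟨n, rfl⟩⟩
  choose k hk using this
  refine ⟨k, fun δ hδ hc => ?_⟩
  obtain ⟨n, hn⟩ := mem_iUnion.1 hδ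
  exact hg n δ hn ⟨hc.1, fun α hα => (hk α n).trans (hc.2 α hα)⟩

lemma Thin.union {S T : Set W} (hS : Thin S) (hT : Thin T) : Thin (S ∪ T) := by
  have : Thin (⋃ n : ℕ, if n = 0 then S else T) := Thin.iUnion fun n => by split_ifs <;> assumption
  refine this.mono ?_
  rintro x (hx | hx)
  · exact mem_iUnion.2 ⟨0, by simpa using hx⟩
  · exact mem_iUnion.2 ⟨1, by simpa using hx⟩

lemma thin_singleton (δ : W) : Thin {δ} := by
  refine ⟨fun _ => δ, fun d hd hc => ?_⟩
  obtain rfl : d = δ := hd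
  obtain ⟨α, hα⟩ := hc.1
  exact lt_irrefl _ (hc.2 α hα)

/-- Every `g : ω₁ → ω₁` has a nonzero closed point: the supremum of an `ω`-chain `a` along which
each `a (n + 1)` bounds `g` on the elements up to `a n`. -/
lemma not_thin_univ : ¬ Thin (univ : Set W) := by
  rintro ⟨g, hg⟩
  have : ∀ α, ∃ b, α < b ∧ ∀ β ≤ α, g β < b := fun α => by
    obtain ⟨b, hb⟩ := exists_bound
      (((((countable_Iio α).insert α).image g)).insert α)
    refine ⟨b, hb _ (mem_insert _ _), fun β hβ => hb _ (mem_insert_of_mem _ ⟨β, ?_, rfl⟩)⟩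
    exact hβ.eq_or_lt.imp id id
  choose h h1 h2 using this
  obtain ⟨a0⟩ : Nonempty W := inferInstance
  let a : ℕ → W := fun n => h^[n] a0
  have ha : ∀ n, a (n + 1) = h (a n) := fun n => Function.iterate_succ_apply' _ _ _
  have hne : {b | ∀ n, a n < b}.Nonempty := by
    obtain ⟨b, hb⟩ := exists_bound (countable_range a)
    exact ⟨b, fun n => hb _ ⟨n, rfl⟩⟩
  obtain ⟨δ, hδ, hmin⟩ := WellFounded.has_min (wellFounded_lt (α := W)) _ hne
  refine hg δ (mem_univ _) ⟨⟨a 0, hδ 0⟩, fun α hα => ?_⟩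
  have : ∃ n, α ≤ a n := by
    by_contra! hcon
    exact hmin α hcon hα
  obtain ⟨n, hn⟩ := this
  exact (h2 (a n) α hn).trans (ha n ▸ hδ (n + 1))

/-- The ideal of thin sets has no maximal positive sets: a set that cannot be split would be
concentrated, by σ-completeness, on a single fibre of an injection into `2^ℕ`. -/
lemma exists_split {P : Set W} (hP : ¬ Thin P) : ∃ Q ⊆ P, ¬ Thin Q ∧ ¬ Thin (P \ Q) := by
  by_contra! hcon
  have hcard : #W ≤ #(ℕ → Bool) := by
    rw [mk_W]; simpa using Cardinal.aleph_one_le_continuum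
  obtain ⟨f⟩ := hcard
  have : ∀ n, ∃ c : Bool, Thin {δ ∈ P | f δ n ≠ c} := fun n => by
    by_cases h : Thin {δ ∈ P | f δ n ≠ true}
    · exact ⟨_, h⟩
    · refine ⟨false, (hcon _ (sep_subset _ _) h).mono ?_⟩
      rintro δ ⟨hδ, h2⟩
      exact ⟨hδ, fun h3 => by simp_all⟩
  choose c hc using this
  have h1 : {δ ∈ P | f δ = c}.Subsingleton := fun x hx y hy =>
    f.injective (hx.2.trans hy.2.symm)
  have h2 : Thin {δ ∈ P | f δ = c} := by
    rcases h1.eq_empty_or_singleton with h | ⟨x, h⟩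
    · rw [h]; exact (thin_singleton (Classical.arbitrary W)).mono (empty_subset _)
    · rw [h]; exact thin_singleton x
  refine hP ((h2.union (Thin.iUnion hc)).mono fun δ hδ => ?_)
  by_cases h : f δ = c
  · exact Or.inl ⟨hδ, h⟩
  · obtain ⟨n, hn⟩ := Function.ne_iff.1 h
    exact Or.inr (mem_iUnion.2 ⟨n, hδ, hn⟩)

lemma exists_disjoint_positive :
    ∃ P : ℕ → Set W, (∀ n, ¬ Thin (P n)) ∧ Pairwise fun m n => Disjoint (P m) (P n) := by
  have hsplit : ∀ P : Set W, ¬ Thin P → ∃ Q, Q ⊆ P ∧ ¬ Thin Q ∧ ¬ Thin (P \ Q) := fun P hP =>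
    exists_split hP
  choose! s hs1 hs2 hs3 using hsplit
  let Q : ℕ → Set W := fun n => s^[n] univ
  have hQ : ∀ n, Q (n + 1) = s (Q n) := fun n => Function.iterate_succ_apply' _ _ _
  have hpos : ∀ n, ¬ Thin (Q n) := fun n => by
    induction n with
    | zero => exact not_thin_univ
    | succ n ih => rw [hQ]; exact hs2 _ ih
  have hanti : Antitone Q := antitone_nat_of_succ_le fun n => by
    rw [hQ]; exact hs1 _ (hpos n)
  refine ⟨fun n => Q n \ Q (n + 1), fun n => ?_, ?_⟩
  · simp only [hQ]; exact hs3 _ (hpos n)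
  · have key : ∀ m n, m < n → Disjoint (Q m \ Q (m + 1)) (Q n \ Q (n + 1)) := fun m n hmn =>
      Set.disjoint_left.2 fun x hx hx' => hx.2 (hanti hmn hx'.1)
    intro m n hmn
    rcases hmn.lt_or_gt with h | h
    · exact key m n h
    · exact (key n m h).symm

/-- Continuum many subsets of `ω₁`, no one contained in another modulo the ideal: the set coded by
`b` is the union of the disjoint positive sets indexed by the graph of `b`, and distinct functions
have incomparable graphs. -/
lemma exists_family : ∃ S : (ℕ → Bool) → Set W, ∀ b c, b ≠ c → ¬ Thin (S b \ S c) := by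
  obtain ⟨P, hP, hd⟩ := exists_disjoint_positive
  have he : Function.Injective (Encodable.encode : ℕ × Bool → ℕ) := Encodable.encode_injective
  refine ⟨fun b => ⋃ n, P (Encodable.encode (n, b n)), fun b c hbc ht => ?_⟩
  obtain ⟨n, hn⟩ := Function.ne_iff.1 hbc
  refine hP (Encodable.encode (n, b n)) (ht.mono fun δ hδ => ?_)
  refine ⟨mem_iUnion.2 ⟨n, hδ⟩, fun h => ?_⟩
  obtain ⟨m, hm⟩ := mem_iUnion.1 h
  have hne : Encodable.encode (n, b n) ≠ Encodable.encode (m, c m) := fun h => by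
    have := he h
    simp only [Prod.mk.injEq] at this
    obtain ⟨rfl, h⟩ := this
    exact hn h
  exact Set.disjoint_left.1 (hd hne) hδ hm

end OrdCont

namespace OrdCont

open Set

/-! ### Filtrations of an ordered continuum and their bad indices -/

/-- A nonzero element of `ω₁` without a predecessor. -/
def Lim (δ : W) : Prop := (∃ α, α < δ) ∧ ∀ α < δ, ∃ β < δ, α < β

/-- An increasing chain, indexed by `ω₁` and continuous at limits, of countable sets of non-extreme
points with dense union. -/
structure IsFilt {X : Type*} [CompleteLinearOrder X] [TopologicalSpace X] (M : W → Set X) :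
    Prop where
  mono : Monotone M
  countable : ∀ α, (M α).Countable
  dense : Dense (⋃ α, M α)
  cont : ∀ δ, Lim δ → ∀ x ∈ M δ, ∃ γ < δ, x ∈ M γ
  inner : ∀ α, ∀ x ∈ M α, x ∈ Ioo (⊥ : X) ⊤

/-- The index `δ` is bad if some point `l` off the closure of `M δ` can, for each earlier `γ`, be
joined to a point of `M δ` by an interval missing the closure of `M γ`. -/
def Bad {X : Type*} [CompleteLinearOrder X] [TopologicalSpace X] (M : W → Set X) (δ : W) : Prop :=
  ∃ l ∈ Ioo (⊥ : X) ⊤, l ∉ closure (M δ) ∧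
    ∀ γ < δ, ∃ m ∈ M δ, ∀ z ∈ uIcc l m, z ∉ closure (M γ)

section Transfer

variable {X Y : Type*} [CompleteLinearOrder X] [TopologicalSpace X]
  [CompleteLinearOrder Y] [TopologicalSpace Y]

lemma IsFilt.exists_mem_closure [FirstCountableTopology X] {M : W → Set X} (hM : IsFilt M) (x : X) :
    ∃ β, x ∈ closure (M β) := by
  obtain ⟨u, hu, hux⟩ := mem_closure_iff_seq_limit.1 (hM.dense x)
  choose k hk using fun n => mem_iUnion.1 (hu n)
  obtain ⟨b, hb⟩ := exists_bound (countable_range k)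
  exact ⟨b, mem_closure_of_tendsto hux
    (Filter.Eventually.of_forall fun n => hM.mono (hb _ ⟨n, rfl⟩).le (hk n))⟩

lemma IsFilt.exists_subset_closure [FirstCountableTopology X] {M : W → Set X}
    (hM : IsFilt M) {s : Set X}
    (hs : s.Countable) : ∃ β, ∀ γ, β ≤ γ → s ⊆ closure (M γ) := by
  choose k hk using hM.exists_mem_closure
  obtain ⟨b, hb⟩ := exists_bound (hs.image k)
  exact ⟨b, fun γ hγ x hx => closure_mono (hM.mono ((hb _ ⟨x, hx, rfl⟩).le.trans hγ)) (hk x)⟩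

/-- A continuous injection is strictly monotone or antitone, so it is open at interior points. -/
lemma inner_image [OrderTopology X] [DenselyOrdered X] [OrderTopology Y] {f : X → Y}
    (hf : Continuous f) (hi : Function.Injective f) {z : X} (hz : z ∈ Ioo (⊥ : X) ⊤) : range f ∈ 𝓝 (f z) ∧ f z ∈ Ioo (⊥ : Y) ⊤ := by
  rcases hf.strictMono_of_inj_boundedOrder' hi with h | h
  · have h1 := h hz.1
    have h2 := h hz.2
    refine ⟨Filter.mem_of_superset (Icc_mem_nhds h1 h2) ?_, bot_le.trans_lt h1, h2.trans_le le_top⟩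
    rw [← uIcc_of_le (h1.trans h2).le]
    exact (intermediate_value_uIcc hf.continuousOn).trans (image_subset_range _ _)
  · have h1 := h hz.1
    have h2 := h hz.2
    refine ⟨Filter.mem_of_superset (Icc_mem_nhds h2 h1) ?_, bot_le.trans_lt h2, h1.trans_le le_top⟩
    rw [← uIcc_of_le (h2.trans h1).le]
    exact (intermediate_value_uIcc hf.continuousOn).trans (image_subset_range _ _)

/-- A continuous injection carries bad indices to bad indices, off a thin set. By first
countability each countable set lies in the closure of some stage; `g` is chosen so that at its
closed points `δ` the two filtrations are interleaved below `δ`. -/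
lemma bad_transfer [OrderTopology X] [DenselyOrdered X] [FirstCountableTopology X]
    [OrderTopology Y] [FirstCountableTopology Y] {f : X → Y} (hf : Continuous f)
    (hi : Function.Injective f)
    {M : W → Set X} {N : W → Set Y} (hM : IsFilt M) (hN : IsFilt N) :
    ∃ g : W → W, ∀ δ, Cl g δ → Bad M δ → Bad N δ := by
  have hcomp : IsClosedMap f := hf.isClosedMap
  have hg : ∀ α, ∃ b, α < b ∧ f '' M α ⊆ closure (N b) ∧
      f ⁻¹' N α ⊆ closure (M b) := fun α => by
    obtain ⟨b1, h1⟩ := hN.exists_subset_closure ((hM.countable α).image f)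
    obtain ⟨b2, h2⟩ := hM.exists_subset_closure ((hN.countable α).preimage hi)
    obtain ⟨b, hb⟩ := exists_bound (s := {α, b1, b2}) (by simp)
    exact ⟨b, hb _ (by simp), h1 b (hb _ (by simp)).le, h2 b (hb _ (by simp)).le⟩
  choose g hg1 hg2 hg3 using hg
  refine ⟨g, fun δ hδ ⟨l, hl, hlM, hlm⟩ => ?_⟩
  have hlim : Lim δ := ⟨hδ.1, fun α hα => ⟨g α, hδ.2 α hα, hg1 α⟩⟩
  -- `f` is open at `z`, so `f z` is a limit of points of `T` in the range of `f`
  have key : ∀ (T : Set Y) (C : Set X), IsClosed C → f ⁻¹' T ⊆ C → ∀ z ∈ Ioo (⊥ : X) ⊤,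
      f z ∈ closure T → z ∈ C := fun T C hC hTC z hz hzT => by
    have h1 : f z ∈ closure (f '' C) := by
      rw [mem_closure_iff_nhds] at hzT ⊢
      intro t ht
      obtain ⟨y, ⟨hyt, x, rfl⟩, hyT⟩ := hzT _ (Filter.inter_mem ht (inner_image hf hi hz).1)
      exact ⟨f x, hyt, x, hTC hyT, rfl⟩
    rw [(hcomp C hC).closure_eq] at h1
    exact (hi.mem_set_image).1 h1
  refine ⟨f l, (inner_image hf hi hl).2, fun hcl => hlM ?_, fun γ hγ => ?_⟩
  · refine key (N δ) _ isClosed_closure (fun x hx => ?_) l hl hcl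
    obtain ⟨γ, hγ, hxγ⟩ := hN.cont δ hlim _ hx
    exact closure_mono (hM.mono (hδ.2 γ hγ).le) (hg3 γ hxγ)
  · obtain ⟨m, hm, hmz⟩ := hlm (g γ) (hδ.2 γ hγ)
    have hmi := hM.inner δ m hm
    have hU : uIcc (f l) (f m) ⊆ (closure (N γ))ᶜ := by
      intro y hy
      obtain ⟨z, hz, rfl⟩ := intermediate_value_uIcc hf.continuousOn hy
      intro hzN
      refine hmz z hz (key (N γ) _ isClosed_closure (hg3 γ) z ?_ hzN)
      exact ⟨(lt_inf_iff.2 ⟨hl.1, hmi.1⟩).trans_le hz.1, hz.2.trans_lt (sup_lt_iff.2 ⟨hl.2, hmi.2⟩)⟩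
    obtain ⟨α, hα, hmα⟩ := hM.cont δ hlim m hm
    have hfm : f m ∈ closure (N δ) :=
      closure_mono (hN.mono (hδ.2 α hα).le) (hg2 α ⟨m, hmα, rfl⟩)
    -- `f m` is only in the closure of `N δ`; a nearby point of `N δ` serves instead
    obtain ⟨b, c, hbc, hbcn, hsub⟩ := exists_Icc_mem_subset_of_mem_nhds
      (isClosed_closure.isOpen_compl.mem_nhds (hU right_mem_uIcc))
    obtain ⟨y, hy, hyN⟩ := mem_closure_iff_nhds.1 hfm _ hbcn
    refine ⟨y, hyN, fun z hz => ?_⟩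
    rcases uIcc_subset_uIcc_union_uIcc (b := f m) hz with h | h
    · exact hU h
    · exact hsub ((ordConnected_Icc.uIcc_subset hbc hy) h)

end Transfer

end OrdCont

namespace OrdCont

open Set

/-! ### Lexicographically ordered sequences of reals -/

/-- Sequences of reals, ordered lexicographically. -/
abbrev Z : Type := Lex (ℕ → ℝ)

lemma Z_lt {x y : Z} : x < y ↔ ∃ n, (∀ j < n, x j = y j) ∧ x n < y n := Iff.rfl

/-- The sequence `x 0, …, x (n - 1), a, b, 0, 0, …`. -/
def sp (x : Z) (n : ℕ) (a b : ℝ) : Z :=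
  toLex fun j => if j < n then x j else if j = n then a else if j = n + 1 then b else 0

lemma sp_lt (x : Z) {n j : ℕ} (a b : ℝ) (h : j < n) : sp x n a b j = x j := if_pos h

lemma sp_eq (x : Z) (n : ℕ) (a b : ℝ) : sp x n a b n = a := by simp [sp]

lemma sp_succ (x : Z) (n : ℕ) (a b : ℝ) : sp x n a b (n + 1) = b := by simp [sp]

lemma sp_gt (x : Z) {n j : ℕ} (a b : ℝ) (h : n + 1 < j) : sp x n a b j = 0 := by
  have h1 : ¬ j < n := by omega
  have h2 : j ≠ n := by omega
  have h3 : j ≠ n + 1 := by omega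
  simp [sp, h1, h2, h3]

lemma sp_mem {A : Set ℝ} {x : Z} {n : ℕ} {a b : ℝ} (hx : ∀ j < n, x j ∈ A) (ha : a ∈ A)
    (hb : b ∈ A) (h0 : (0 : ℝ) ∈ A) (j : ℕ) : sp x n a b j ∈ A := by
  simp only [sp, Pi.toLex_apply]
  split_ifs with h
  exacts [hx j h, ha, hb, h0]

lemma lt_sp {x : Z} {n : ℕ} {a b : ℝ} (h : x n < a) : x < sp x n a b :=
  Z_lt.2 ⟨n, fun _ hj => (sp_lt x a b hj).symm, by rwa [sp_eq]⟩

lemma gt_sp {x : Z} {n : ℕ} {a b : ℝ} (h : a < x n) : sp x n a b < x :=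
  Z_lt.2 ⟨n, fun _ hj => sp_lt x a b hj, by rwa [sp_eq]⟩

lemma exists_first_diff {x y : Z} (h : x ≠ y) : ∃ n, (∀ j < n, x j = y j) ∧ x n ≠ y n := by
  rcases lt_or_gt_of_ne h with h | h
  · obtain ⟨n, h1, h2⟩ := Z_lt.1 h
    exact ⟨n, h1, h2.ne⟩
  · obtain ⟨n, h1, h2⟩ := Z_lt.1 h
    exact ⟨n, fun j hj => (h1 j hj).symm, h2.ne'⟩

lemma agree_of_between {a b z : Z} {k : ℕ} (hab : ∀ j < k, a j = b j) (h1 : a ≤ z) (h2 : z ≤ b) :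
    ∀ j < k, z j = a j := by
  by_contra! hcon
  obtain ⟨j, hj, hne⟩ := hcon
  obtain ⟨n, hn1, hn2⟩ := exists_first_diff (x := z) (y := a) (fun h => hne (by rw [h]))
  have hnk : n < k := by
    refine lt_of_le_of_lt ?_ hj
    by_contra! h
    exact hne (hn1 j h)
  rcases hn2.lt_or_gt with h | h
  · exact absurd (Z_lt.2 ⟨n, hn1, h⟩) h1.not_gt
  · refine absurd (Z_lt.2 ⟨n, fun i hi => ?_, ?_⟩) h2.not_gt
    · rw [hn1 i hi, hab i (hi.trans hnk)]
    · rwa [← hab n hnk]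

/-- If two sequences first differ at `j`, some `x 0, …, x (j - 1), q, 0, …` with `q` rational lies
strictly between them. -/
lemma exists_between_sp {x u : Z} {j : ℕ} (h : ∀ i < j, x i = u i) (hne : x j ≠ u j) :
    ∃ q : ℚ, (x < sp x j q 0 ∧ sp x j q 0 < u) ∨ (u < sp x j q 0 ∧ sp x j q 0 < x) := by
  rcases hne.lt_or_gt with hl | hl
  · obtain ⟨q, h1, h2⟩ := exists_rat_btwn hl
    refine ⟨q, Or.inl ⟨lt_sp h1, Z_lt.2 ⟨j, fun i hi => ?_, by rwa [sp_eq]⟩⟩⟩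
    rw [sp_lt _ _ _ hi, h i hi]
  · obtain ⟨q, h1, h2⟩ := exists_rat_btwn hl
    refine ⟨q, Or.inr ⟨Z_lt.2 ⟨j, fun i hi => ?_, by rwa [sp_eq]⟩, gt_sp h2⟩⟩
    rw [sp_lt _ _ _ hi, h i hi]

/-! ### The sets of entries -/

lemma exists_reals : ∃ r : W → ℝ, Function.Injective r ∧ ∀ w, Irrational (r w) ∧ 0 < r w := by
  have h : Cardinal.aleph 1 ≤ #{x : ℝ | Irrational x ∧ 0 < x} := by
    rw [← Cardinal.succ_aleph0, Order.succ_le_iff, ← not_le, Cardinal.le_aleph0_iff_set_countable]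
    intro hc
    have h2 : (Ioi (0 : ℝ)).Countable := by
      refine (hc.union (countable_range ((↑) : ℚ → ℝ))).mono fun x hx => ?_
      by_cases hr : x ∈ range ((↑) : ℚ → ℝ)
      · exact Or.inr hr
      · exact Or.inl ⟨hr, hx⟩
    have h3 := Cardinal.mk_Ioi_real 0
    rw [← Cardinal.le_aleph0_iff_set_countable, h3] at h2
    exact h2.not_gt Cardinal.aleph0_lt_continuum
  rw [← mk_W] at h
  obtain ⟨f⟩ := h
  exact ⟨fun w => f w, fun a b hab => f.injective (Subtype.ext hab), fun w => (f w).2⟩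

/-- A fixed injection of `ω₁` into the positive irrationals. -/
noncomputable def r : W → ℝ := exists_reals.choose

lemma r_inj : Function.Injective r := exists_reals.choose_spec.1

lemma r_irr (w : W) : Irrational (r w) := (exists_reals.choose_spec.2 w).1

lemma r_pos (w : W) : 0 < r w := (exists_reals.choose_spec.2 w).2

/-- The rationals together with the `r β`, `β ∈ B`. -/
def A (B : Set W) : Set ℝ := range ((↑) : ℚ → ℝ) ∪ r '' B

lemma A_mono : Monotone A := fun _ _ h => union_subset_union_right _ (image_mono h)

lemma rat_mem_A (B : Set W) (q : ℚ) : (q : ℝ) ∈ A B := Or.inl ⟨q, rfl⟩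

lemma zero_mem_A (B : Set W) : (0 : ℝ) ∈ A B := by simpa using rat_mem_A B 0

lemma one_mem_A (B : Set W) : (1 : ℝ) ∈ A B := by simpa using rat_mem_A B 1

lemma r_mem_A {B : Set W} {w : W} : r w ∈ A B ↔ w ∈ B := by
  refine ⟨?_, fun h => Or.inr ⟨w, h, rfl⟩⟩
  rintro (h | ⟨v, hv, hvw⟩)
  · exact absurd h (r_irr w)
  · rwa [← r_inj hvw]

lemma A_countable {B : Set W} (h : B.Countable) : (A B).Countable :=
  (countable_range _).union (h.image _)

lemma A_limit {δ : W} (hδ : Lim δ) {a : ℝ} (ha : a ∈ A (Iio δ)) : ∃ γ < δ, a ∈ A (Iio γ) := by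
  obtain ⟨α, hα⟩ := hδ.1
  rcases ha with h | ⟨w, hw, rfl⟩
  · exact ⟨α, hα, Or.inl h⟩
  · obtain ⟨β, hβ, hw⟩ := hδ.2 w hw
    exact ⟨β, hβ, r_mem_A.2 hw⟩

lemma A_limit_fin {δ : W} (hδ : Lim δ) {x : Z} {n : ℕ} (hx : ∀ j < n, x j ∈ A (Iio δ)) :
    ∃ γ < δ, ∀ j < n, x j ∈ A (Iio γ) := by
  induction n with
  | zero => exact ⟨_, hδ.1.choose_spec, by simp⟩
  | succ n ih =>
    obtain ⟨γ, hγ, h⟩ := ih fun j hj => hx j (by omega)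
    obtain ⟨γ', hγ', h'⟩ := A_limit hδ (hx n (by omega))
    refine ⟨max γ γ', max_lt hγ hγ', fun j hj => ?_⟩
    rcases Nat.lt_succ_iff_lt_or_eq.1 hj with hj | rfl
    · exact A_mono (Iio_subset_Iio (le_max_left _ _)) (h j hj)
    · exact A_mono (Iio_subset_Iio (le_max_right _ _)) h'

lemma exists_ladder (δ : W) : ∃ e : ℕ → ℝ, range e = {1} ∪ r '' Iio δ := by
  obtain ⟨e, he⟩ := ((countable_singleton (1 : ℝ)).union
    ((countable_Iio δ).image r)).exists_eq_range ⟨1, Or.inl rfl⟩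
  exact ⟨e, he.symm⟩

/-- A sequence enumerating `1` and the `r β`, `β < δ`. The value `1` keeps the enumerated set
nonempty; as all entries are positive, the sequence is never eventually zero. -/
noncomputable def e (δ : W) : Z := toLex (exists_ladder δ).choose

lemma e_range (δ : W) : range (fun n => e δ n) = {1} ∪ r '' Iio δ := (exists_ladder δ).choose_spec

lemma e_mem (δ : W) (n : ℕ) : e δ n = 1 ∨ ∃ β < δ, e δ n = r β := by
  have : e δ n ∈ {1} ∪ r '' Iio δ := by rw [← e_range]; exact ⟨n, rfl⟩
  rcases this with h | ⟨β, h, h'⟩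
  · exact Or.inl h
  · exact Or.inr ⟨β, h, h'.symm⟩

lemma e_mem_A (δ : W) (n : ℕ) : e δ n ∈ A (Iio δ) := by
  rcases e_mem δ n with h | ⟨β, h, h'⟩
  · rw [h]; exact one_mem_A _
  · rw [h']; exact r_mem_A.2 h

lemma e_pos (δ : W) (n : ℕ) : 0 < e δ n := by
  rcases e_mem δ n with h | ⟨β, h, h'⟩
  · rw [h]; exact one_pos
  · rw [h']; exact r_pos β

lemma e_hits {β δ : W} (h : β < δ) : ∃ n, e δ n = r β := by
  have : r β ∈ range (fun n => e δ n) := by rw [e_range]; exact Or.inr ⟨β, h, rfl⟩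
  exact this

/-- The sequences in `A B` that are eventually zero. -/
def F (B : Set W) : Set Z := {x | (∀ n, x n ∈ A B) ∧ ∃ N, ∀ n, N ≤ n → x n = 0}

lemma F_mono : Monotone F := fun _ _ h _ hx => ⟨fun n => A_mono h (hx.1 n), hx.2⟩

lemma sp_mem_F {B : Set W} {x : Z} {n : ℕ} {a b : ℝ} (hx : ∀ j < n, x j ∈ A B) (ha : a ∈ A B)
    (hb : b ∈ A B) : sp x n a b ∈ F B :=
  ⟨sp_mem hx ha hb (zero_mem_A B), n + 2, fun _ h => sp_gt _ _ _ (by omega)⟩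

lemma zero_mem_F (B : Set W) : (toLex fun _ => 0 : Z) ∈ F B :=
  ⟨fun _ => zero_mem_A B, 0, fun _ _ => rfl⟩

lemma F_countable {B : Set W} (h : B.Countable) : (F B).Countable := by
  have : Countable (A B) := (A_countable h).to_subtype
  refine (countable_range fun l : List (A B) =>
    (toLex fun n => ((l[n]?).map Subtype.val).getD 0 : Z)).mono ?_
  rintro x ⟨hx, N, hN⟩
  refine ⟨(List.range N).map fun n => ⟨x n, hx n⟩, ?_⟩
  funext n
  rcases lt_or_ge n N with h | h
  · simp [List.getElem?_range h]
  · have : (List.range N)[n]? = none := by simpa using h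
    simp [hN n h, this]

lemma F_limit {δ : W} (hδ : Lim δ) {x : Z} (hx : x ∈ F (Iio δ)) : ∃ γ < δ, x ∈ F (Iio γ) := by
  obtain ⟨h1, N, hN⟩ := hx
  obtain ⟨γ, hγ, h⟩ := A_limit_fin hδ (x := x) (n := N) fun j _ => h1 j
  refine ⟨γ, hγ, fun n => ?_, N, hN⟩
  rcases lt_or_ge n N with hn | hn
  · exact h n hn
  · rw [hN n hn]; exact zero_mem_A _

lemma e_notMem_F (δ : W) (B : Set W) : e δ ∉ F B := fun ⟨_, N, hN⟩ =>
  (e_pos δ N).ne' (hN N le_rfl)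

/-- Above any `y ∈ F` and below any larger sequence there are uncountably many disjoint
intervals of `F`. -/
lemma F_many {y y' : Z} (hy : y ∈ F univ) (h : y < y') :
    ∃ φ ψ : W → Z, (∀ w, φ w ∈ F univ ∧ ψ w ∈ F univ ∧ y < φ w ∧ φ w < ψ w ∧ ψ w < y') ∧
      ∀ w w', w ≠ w' → ψ w < φ w' ∨ ψ w' < φ w := by
  obtain ⟨n, hn1, hn2⟩ := Z_lt.1 h
  obtain ⟨hyA, N0, hN0⟩ := hy
  obtain ⟨N, hN, hnN⟩ : ∃ N, N0 ≤ N ∧ n < N := ⟨max N0 (n + 1), le_max_left _ _, by simp⟩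
  have key : ∀ w w', r w < r w' → sp y N (r w) 1 < sp y N (r w') (-1) := fun w w' hw =>
    Z_lt.2 ⟨N, fun j hj => by rw [sp_lt _ _ _ hj, sp_lt _ _ _ hj], by rwa [sp_eq, sp_eq]⟩
  have hneg : (-1 : ℝ) ∈ A univ := by simpa using rat_mem_A univ (-1)
  have h1 : ∀ w, sp y N (r w) (-1) < sp y N (r w) 1 := fun w => by
    refine Z_lt.2 ⟨N + 1, fun j hj => ?_, by rw [sp_succ, sp_succ]; norm_num⟩
    rcases Nat.lt_succ_iff_lt_or_eq.1 hj with hj | rfl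
    · rw [sp_lt _ _ _ hj, sp_lt _ _ _ hj]
    · rw [sp_eq, sp_eq]
  have h2 : ∀ w, sp y N (r w) 1 < y' := fun w =>
    Z_lt.2 ⟨n, fun j hj => by rw [sp_lt _ _ _ (hj.trans hnN), hn1 j hj],
      by rwa [sp_lt _ _ _ hnN]⟩
  refine ⟨fun w => sp y N (r w) (-1), fun w => sp y N (r w) 1, fun w => ⟨?_, ?_, ?_, ?_, ?_⟩, ?_⟩
  · exact sp_mem_F (fun j _ => hyA j) (r_mem_A.2 trivial) hneg
  · exact sp_mem_F (fun j _ => hyA j) (r_mem_A.2 trivial) (one_mem_A _)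
  · exact lt_sp (by rw [hN0 N hN]; exact r_pos w)
  · exact h1 w
  · exact h2 w
  · intro w w' hw
    exact ((r_inj.ne hw).lt_or_gt).imp (key w w') (key w' w)

lemma F_above (y : Z) : ∃ y' ∈ F univ, y < y' := by
  obtain ⟨q, hq⟩ := exists_rat_gt (y 0)
  exact ⟨sp y 0 q 0, sp_mem_F (by simp) (rat_mem_A _ q) (zero_mem_A _), lt_sp hq⟩

lemma F_below (y : Z) : ∃ y' ∈ F univ, y' < y := by
  obtain ⟨q, hq⟩ := exists_rat_lt (y 0)
  exact ⟨sp y 0 q 0, sp_mem_F (by simp) (rat_mem_A _ q) (zero_mem_A _), gt_sp hq⟩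

end OrdCont

namespace OrdCont

open Set

/-! ### The orders `G S` -/

/-- The first coordinates used at stage `B`: the sequences in `F B` and the ladders `e β` with
`β ∈ S ∩ B`. -/
def Kx (S B : Set W) : Set Z := F B ∪ e '' (S ∩ B)

lemma Kx_mono (S : Set W) : Monotone (Kx S) := fun _ _ h =>
  union_subset_union (F_mono h) (image_mono (inter_subset_inter_right _ h))

/-- The gadget coding `S ⊆ ω₁`: a copy of the dense order `F` is inserted at each point of `F`
and at each ladder `e β` with `β ∈ S`. -/
abbrev G (S : Set W) : Type :=
  {p : Z ×ₗ Z // (ofLex p).1 ∈ Kx S univ ∧ (ofLex p).2 ∈ F univ}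

variable {S : Set W}

/-- First coordinate. -/
def G.x (p : G S) : Z := (ofLex p.1).1

/-- Second coordinate. -/
def G.y (p : G S) : Z := (ofLex p.1).2

lemma G.hx (p : G S) : p.x ∈ Kx S univ := p.2.1

lemma G.hy (p : G S) : p.y ∈ F univ := p.2.2

/-- The point of `G S` with given coordinates. -/
def G.mk (x y : Z) (hx : x ∈ Kx S univ) (hy : y ∈ F univ) : G S := ⟨toLex (x, y), hx, hy⟩

lemma G_lt {p q : G S} : p < q ↔ p.x < q.x ∨ p.x = q.x ∧ p.y < q.y := Prod.Lex.lt_iff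

lemma G_le_x {p q : G S} (h : p ≤ q) : p.x ≤ q.x := by
  rcases h.lt_or_eq with h | rfl
  · rcases G_lt.1 h with h | h
    exacts [h.le, h.1.le]
  · exact le_rfl

/-- The countable stages of `G S`. -/
def MG (S : Set W) (δ : W) : Set (G S) := {p | p.x ∈ Kx S (Iio δ) ∧ p.y ∈ F (Iio δ)}

/-- An increasing chain, indexed by `ω₁` and continuous at limits, of countable sets covering `L`. -/
structure LFilt {L : Type*} (M : W → Set L) : Prop where
  mono : Monotone M
  countable : ∀ α, (M α).Countable
  cover : ∀ l, ∃ α, l ∈ M α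
  cont : ∀ δ, Lim δ → ∀ x ∈ M δ, ∃ γ < δ, x ∈ M γ

lemma F_cover {x : Z} (h : x ∈ F univ) : ∃ α, x ∈ F (Iio α) := by
  have : ∀ n, ∃ α, x n ∈ A (Iio α) := fun n => by
    rcases h.1 n with h | ⟨w, -, hw⟩
    · exact ⟨Classical.arbitrary W, Or.inl h⟩
    · obtain ⟨b, hb⟩ := exists_bound (countable_singleton w)
      exact ⟨b, by rw [← hw]; exact r_mem_A.2 (hb w rfl)⟩
  choose k hk using this
  obtain ⟨b, hb⟩ := exists_bound (countable_range k)
  exact ⟨b, fun n => A_mono (Iio_subset_Iio (hb _ ⟨n, rfl⟩).le) (hk n), h.2⟩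

lemma Kx_cover {x : Z} (h : x ∈ Kx S univ) : ∃ α, x ∈ Kx S (Iio α) := by
  rcases h with h | ⟨w, hw, rfl⟩
  · exact (F_cover h).imp fun α h => Or.inl h
  · obtain ⟨b, hb⟩ := exists_bound (countable_singleton w)
    exact ⟨b, Or.inr ⟨w, ⟨hw.1, hb w rfl⟩, rfl⟩⟩

lemma Kx_limit {δ : W} (hδ : Lim δ) {x : Z} (h : x ∈ Kx S (Iio δ)) :
    ∃ γ < δ, x ∈ Kx S (Iio γ) := by
  rcases h with h | ⟨w, hw, rfl⟩
  · obtain ⟨γ, hγ, h⟩ := F_limit hδ h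
    exact ⟨γ, hγ, Or.inl h⟩
  · obtain ⟨b, hb, hwb⟩ := hδ.2 w hw.2
    exact ⟨b, hb, Or.inr ⟨w, ⟨hw.1, hwb⟩, rfl⟩⟩

lemma Kx_countable (S : Set W) (α : W) : (Kx S (Iio α)).Countable :=
  (F_countable (countable_Iio α)).union
    (((countable_Iio α).mono inter_subset_right).image e)

lemma MG_filt (S : Set W) : LFilt (MG S) where
  mono _ _ h _ hp := ⟨Kx_mono S (Iio_subset_Iio h) hp.1, F_mono (Iio_subset_Iio h) hp.2⟩
  countable α := by
    have hinj : Function.Injective fun p : G S => (p.x, p.y) := fun p q h => by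
      obtain ⟨h1, h2⟩ := Prod.mk.inj h
      exact Subtype.ext (Prod.ext h1 h2)
    exact (((Kx_countable S α).prod (F_countable (countable_Iio α))).preimage hinj).mono
      fun p hp => mk_mem_prod hp.1 hp.2
  cover p := by
    obtain ⟨α, hα⟩ := Kx_cover p.hx
    obtain ⟨β, hβ⟩ := F_cover p.hy
    exact ⟨max α β, Kx_mono S (Iio_subset_Iio (le_max_left _ _)) hα,
      F_mono (Iio_subset_Iio (le_max_right _ _)) hβ⟩
  cont δ hδ p hp := by
    obtain ⟨α, hα, h1⟩ := Kx_limit hδ hp.1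
    obtain ⟨β, hβ, h2⟩ := F_limit hδ hp.2
    exact ⟨max α β, max_lt hα hβ, Kx_mono S (Iio_subset_Iio (le_max_left _ _)) h1,
      F_mono (Iio_subset_Iio (le_max_right _ _)) h2⟩

lemma Kx_entries {α : W} {x : Z} (h : x ∈ Kx S (Iio α)) (n : ℕ) : x n ∈ A (Iio α) := by
  rcases h with h | ⟨w, hw, rfl⟩
  · exact h.1 n
  · exact A_mono (Iio_subset_Iio (le_of_lt hw.2)) (e_mem_A w n)

/-- The indices in `S` are bad for `MG S`, as witnessed by a point of the copy of `F` inserted at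
the ladder `e δ`. No point of `MG S δ` has first coordinate `e δ`, because the ladder is not
eventually zero and mentions every `r β` with `β < δ`. For `γ < δ`, cutting the ladder after the
entry `r γ` gives a point of `MG S δ` in an interval all of whose points mention `r γ`. -/
lemma G_bad {δ : W} (hδ : δ ∈ S) : ∃ l : G S,
    (∃ lo hi, lo < l ∧ l < hi ∧ ∀ m ∈ MG S δ, ¬ (lo < m ∧ m < hi)) ∧
    ∀ γ < δ, ∃ m ∈ MG S δ, ∃ lo hi, (lo < l ∧ l < hi) ∧ (lo < m ∧ m < hi) ∧
      ∀ m' ∈ MG S γ, ¬ (lo < m' ∧ m' < hi) := by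
  have heK : e δ ∈ Kx S univ := Or.inr ⟨δ, ⟨hδ, trivial⟩, rfl⟩
  refine ⟨G.mk (e δ) (toLex fun _ => 0) heK (zero_mem_F _), ?_, fun γ hγ => ?_⟩
  · obtain ⟨y1, hy1, h1⟩ := F_below (toLex fun _ => 0 : Z)
    obtain ⟨y2, hy2, h2⟩ := F_above (toLex fun _ => 0 : Z)
    refine ⟨G.mk (e δ) y1 heK hy1, G.mk (e δ) y2 heK hy2, G_lt.2 (Or.inr ⟨rfl, h1⟩),
      G_lt.2 (Or.inr ⟨rfl, h2⟩), fun m hm ⟨hlo, hhi⟩ => ?_⟩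
    have hmx : m.x = e δ := le_antisymm (G_le_x hhi.le) (G_le_x hlo.le)
    have hmK := hm.1
    rw [hmx] at hmK
    rcases hmK with h | ⟨β, ⟨-, hβ⟩, h⟩
    · exact e_notMem_F δ _ h
    · obtain ⟨n, hn⟩ := e_hits (mem_Iio.1 hβ)
      rw [← h] at hn
      have := e_mem_A β n
      rw [hn] at this
      exact lt_irrefl _ (mem_Iio.1 (r_mem_A.1 this))
  · obtain ⟨n, hn⟩ := e_hits hγ
    obtain ⟨q1, hq1⟩ := exists_rat_lt (min (e δ (n + 1)) 0)
    obtain ⟨q2, hq2⟩ := exists_rat_gt (max (e δ (n + 1)) 0)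
    have hF : ∀ q : ℚ, ∀ B : Set W, Iio δ ⊆ B → sp (e δ) (n + 1) q 0 ∈ F B := fun q B hB =>
      sp_mem_F (fun j _ => A_mono hB (e_mem_A δ j)) (rat_mem_A _ q) (zero_mem_A _)
    have hK : ∀ q : ℚ, sp (e δ) (n + 1) q 0 ∈ Kx S univ := fun q =>
      Or.inl (hF q _ (subset_univ _))
    have hcmp : ∀ q q' : ℚ, (q : ℝ) < q' → sp (e δ) (n + 1) q 0 < sp (e δ) (n + 1) q' 0 :=
      fun q q' h => Z_lt.2 ⟨n + 1, fun j hj => by rw [sp_lt _ _ _ hj, sp_lt _ _ _ hj],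
        by rwa [sp_eq, sp_eq]⟩
    have hm0 : sp (e δ) (n + 1) ((0 : ℚ) : ℝ) 0 ∈ F (Iio δ) := hF 0 _ subset_rfl
    refine ⟨G.mk (sp (e δ) (n + 1) ((0 : ℚ) : ℝ) 0) (toLex fun _ => 0) (hK 0) (zero_mem_F _),
      ⟨Or.inl hm0, zero_mem_F _⟩, G.mk _ _ (hK q1) (zero_mem_F _),
      G.mk _ _ (hK q2) (zero_mem_F _), ⟨?_, ?_⟩, ⟨?_, ?_⟩, fun m' hm' ⟨hlo, hhi⟩ => ?_⟩
    · exact G_lt.2 (Or.inl (gt_sp (hq1.trans_le (min_le_left _ _))))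
    · exact G_lt.2 (Or.inl (lt_sp ((le_max_left _ _).trans_lt hq2)))
    · exact G_lt.2 (Or.inl (hcmp _ _ (by simpa using hq1.trans_le (min_le_right _ _))))
    · exact G_lt.2 (Or.inl (hcmp _ _ (by simpa using (le_max_right _ _).trans_lt hq2)))
    · have h := agree_of_between (k := n + 1)
        (fun j hj => (sp_lt (e δ) (q1 : ℝ) 0 hj).trans (sp_lt (e δ) (q2 : ℝ) 0 hj).symm)
        (G_le_x hlo.le) (G_le_x hhi.le) n n.lt_succ_self
      have h2 : m'.x n = r γ := h.trans ((sp_lt _ _ _ n.lt_succ_self).trans hn)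
      have h3 := Kx_entries hm'.1 n
      rw [h2] at h3
      exact lt_irrefl _ (mem_Iio.1 (r_mem_A.1 h3))

/-- At a limit `δ ∉ S`, any point off `MG S δ` is separated from all points of `MG S δ` by points of
a single earlier stage. -/
lemma G_good {δ : W} (hlim : Lim δ) (hδ : δ ∉ S) (l : G S) (hl : l ∉ MG S δ) :
    ∃ γ < δ, ∀ m ∈ MG S δ, ∃ m' ∈ MG S γ, m' ∈ uIcc l m := by
  classical
  have hA0 : ∀ γ, (toLex fun _ => 0 : Z) ∈ F (Iio γ) := fun γ => zero_mem_F _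
  -- a first difference in the first coordinate, preceded by entries from stage `γ`
  have key1 : ∀ γ, ∀ m : G S, ∀ j, (∀ i < j, l.x i = m.x i) → l.x j ≠ m.x j →
      (∀ i < j, l.x i ∈ A (Iio γ)) → ∃ m' ∈ MG S γ, m' ∈ uIcc l m := by
    intro γ m j h1 h2 h3
    obtain ⟨q, hq⟩ := exists_between_sp h1 h2
    have hF : sp l.x j q 0 ∈ F (Iio γ) := sp_mem_F h3 (rat_mem_A _ q) (zero_mem_A _)
    refine ⟨G.mk (sp l.x j q 0) (toLex fun _ => 0) (Or.inl (F_mono (subset_univ _) hF))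
      (zero_mem_F _), ⟨Or.inl hF, hA0 γ⟩, ?_⟩
    rcases hq with ⟨h, h'⟩ | ⟨h, h'⟩
    · exact Icc_subset_uIcc ⟨le_of_lt (G_lt.2 (Or.inl h)), le_of_lt (G_lt.2 (Or.inl h'))⟩
    · exact Icc_subset_uIcc' ⟨le_of_lt (G_lt.2 (Or.inl h)), le_of_lt (G_lt.2 (Or.inl h'))⟩
  by_cases hx : ∃ n, l.x n ∉ A (Iio δ)
  · have hn := Nat.find_spec hx
    have hmin : ∀ j < Nat.find hx, l.x j ∈ A (Iio δ) := fun j hj => not_not.1 (Nat.find_min hx hj)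
    set n := Nat.find hx
    obtain ⟨γ, hγ, hγn⟩ := A_limit_fin hlim hmin
    refine ⟨γ, hγ, fun m hm => ?_⟩
    have hne : l.x n ≠ m.x n := fun h => hn (h ▸ Kx_entries hm.1 n)
    obtain ⟨j, hj1, hj2⟩ := exists_first_diff (x := l.x) (y := m.x) fun h => hne (by rw [h])
    have hjn : j ≤ n := by
      by_contra! h
      exact hne (hj1 n h)
    exact key1 γ m j hj1 hj2 fun i hi => hγn i (hi.trans_le hjn)
  · push Not at hx
    have hxK : l.x ∈ Kx S (Iio δ) := by
      rcases l.hx with h | ⟨β, ⟨hβS, -⟩, h⟩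
      · exact Or.inl ⟨hx, h.2⟩
      · refine Or.inr ⟨β, ⟨hβS, ?_⟩, h⟩
        rcases lt_trichotomy β δ with hb | rfl | hb
        · exact hb
        · exact absurd hβS hδ
        · obtain ⟨n, hn⟩ := e_hits hb
          rw [h] at hn
          have := hx n
          rw [hn] at this
          exact absurd (r_mem_A.1 this) (lt_irrefl δ)
    have hyF : l.y ∉ F (Iio δ) := fun h => hl ⟨hxK, h⟩
    have hy : ∃ n, l.y n ∉ A (Iio δ) := by
      by_contra! h
      exact hyF ⟨h, l.hy.2⟩
    have hn := Nat.find_spec hy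
    have hmin : ∀ j < Nat.find hy, l.y j ∈ A (Iio δ) := fun j hj => not_not.1 (Nat.find_min hy hj)
    set n := Nat.find hy
    obtain ⟨γ1, hγ1, hγn⟩ := A_limit_fin hlim hmin
    obtain ⟨γ0, hγ0, hxγ⟩ := Kx_limit hlim hxK
    refine ⟨max γ0 γ1, max_lt hγ0 hγ1, fun m hm => ?_⟩
    have hxγ' : l.x ∈ Kx S (Iio (max γ0 γ1)) := Kx_mono S (Iio_subset_Iio (le_max_left _ _)) hxγ
    by_cases hxm : l.x = m.x
    · have hne : l.y n ≠ m.y n := fun h => hn (h ▸ hm.2.1 n)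
      obtain ⟨j, hj1, hj2⟩ := exists_first_diff (x := l.y) (y := m.y) fun h => hne (by rw [h])
      have hjn : j ≤ n := by
        by_contra! h
        exact hne (hj1 n h)
      obtain ⟨q, hq⟩ := exists_between_sp hj1 hj2
      have hF : sp l.y j q 0 ∈ F (Iio (max γ0 γ1)) := sp_mem_F
        (fun i hi => A_mono (Iio_subset_Iio (le_max_right _ _)) (hγn i (hi.trans_le hjn)))
        (rat_mem_A _ q) (zero_mem_A _)
      refine ⟨G.mk l.x (sp l.y j q 0) l.hx (F_mono (subset_univ _) hF), ⟨hxγ', hF⟩, ?_⟩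
      rcases hq with ⟨h, h'⟩ | ⟨h, h'⟩
      · exact Icc_subset_uIcc
          ⟨le_of_lt (G_lt.2 (Or.inr ⟨rfl, h⟩)), le_of_lt (G_lt.2 (Or.inr ⟨hxm, h'⟩))⟩
      · exact Icc_subset_uIcc'
          ⟨le_of_lt (G_lt.2 (Or.inr ⟨hxm.symm, h⟩)), le_of_lt (G_lt.2 (Or.inr ⟨rfl, h'⟩))⟩
    · obtain ⟨j, hj1, hj2⟩ := exists_first_diff hxm
      exact key1 _ m j hj1 hj2 fun i _ => Kx_entries hxγ' i

/-- Every nonempty open interval contains an uncountable family of disjoint ones. -/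
def NC (L : Type*) [LinearOrder L] : Prop := ∀ a b : L, a < b → ∃ φ ψ : W → L,
  (∀ w, a < φ w ∧ φ w < ψ w ∧ ψ w < b) ∧ ∀ w w', w ≠ w' → ψ w < φ w' ∨ ψ w' < φ w

lemma NC.denselyOrdered {L : Type*} [LinearOrder L] (h : NC L) : DenselyOrdered L :=
  ⟨fun a b hab => by
    obtain ⟨φ, ψ, h1, -⟩ := h a b hab
    obtain ⟨h2, h3, h4⟩ := h1 (Classical.arbitrary W)
    exact ⟨_, h2, h3.trans h4⟩⟩

lemma G_NC (S : Set W) : NC (G S) := by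
  intro a b hab
  -- all intervals are found in the copy of `F` containing `a`
  have : ∃ y', a.y < y' ∧ ∀ p : G S, p.x = a.x → p.y < y' → p < b := by
    rcases G_lt.1 hab with h | h
    · obtain ⟨y', -, hy'⟩ := F_above a.y
      exact ⟨y', hy', fun p hp _ => G_lt.2 (Or.inl (hp ▸ h))⟩
    · exact ⟨b.y, h.2, fun p hp hpy => G_lt.2 (Or.inr ⟨hp.trans h.1, hpy⟩)⟩
  obtain ⟨y', hy', hb⟩ := this
  obtain ⟨φ, ψ, h1, h2⟩ := F_many a.hy hy'
  refine ⟨fun w => G.mk a.x (φ w) a.hx (h1 w).1, fun w => G.mk a.x (ψ w) a.hx (h1 w).2.1,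
    fun w => ⟨G_lt.2 (Or.inr ⟨rfl, (h1 w).2.2.1⟩), G_lt.2 (Or.inr ⟨rfl, (h1 w).2.2.2.1⟩),
      hb _ rfl (h1 w).2.2.2.2⟩, fun w w' hw => ?_⟩
  exact (h2 w w' hw).imp (fun h => G_lt.2 (Or.inr ⟨rfl, h⟩)) (fun h => G_lt.2 (Or.inr ⟨rfl, h⟩))

instance (S : Set W) : DenselyOrdered (G S) := (G_NC S).denselyOrdered

instance (S : Set W) : NoMaxOrder (G S) := ⟨fun a => by
  obtain ⟨y', hy, h⟩ := F_above a.y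
  exact ⟨G.mk a.x y' a.hx hy, G_lt.2 (Or.inr ⟨rfl, h⟩)⟩⟩

instance (S : Set W) : NoMinOrder (G S) := ⟨fun a => by
  obtain ⟨y', hy, h⟩ := F_below a.y
  exact ⟨G.mk a.x y' a.hx hy, G_lt.2 (Or.inr ⟨rfl, h⟩)⟩⟩

instance (S : Set W) : Nonempty (G S) :=
  ⟨G.mk (toLex fun _ => 0) (toLex fun _ => 0) (Or.inl (zero_mem_F _)) (zero_mem_F _)⟩

lemma mk_G (S : Set W) : #(G S) ≤ Cardinal.aleph 1 := by
  have h : (⋃ α, MG S α) = Set.univ := eq_univ_of_forall fun p => mem_iUnion.2 ((MG_filt S).cover p)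
  rw [← Cardinal.mk_univ, ← h]
  refine (Cardinal.mk_iUnion_le _).trans ?_
  rw [mk_W]
  refine (mul_le_mul' le_rfl (ciSup_le' (a := ℵ₀) fun α => ?_)).trans ?_
  · exact ((MG_filt S).countable α).le_aleph0
  · exact (Cardinal.mul_aleph0_eq (Cardinal.aleph0_le_aleph 1)).le

end OrdCont

namespace OrdCont

open Set DedekindCut

/-! ### Countable cofinality -/

/-- Every subset has a countable cofinal subset. -/
def Cof (L : Type*) [LinearOrder L] : Prop :=
  ∀ T : Set L, ∃ C ⊆ T, C.Countable ∧ ∀ t ∈ T, ∃ c ∈ C, t ≤ c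

lemma Cof.pullback {L L' : Type*} [LinearOrder L] [LinearOrder L'] (h : Cof L') {f : L → L'}
    (hf : StrictMono f) : Cof L := by
  intro T
  obtain ⟨C, hCT, hC, hcof⟩ := h (f '' T)
  refine ⟨T ∩ f ⁻¹' C, inter_subset_left,
    (hC.preimage hf.injective).mono inter_subset_right, fun t ht => ?_⟩
  obtain ⟨c, hc, htc⟩ := hcof _ ⟨t, ht, rfl⟩
  obtain ⟨s, hs, rfl⟩ := hCT hc
  exact ⟨s, ⟨hs, hc⟩, hf.le_iff_le.1 htc⟩

lemma cof_of_max {L : Type*} [LinearOrder L] {T : Set L} {a : L} (ha : a ∈ T)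
    (h : ∀ t ∈ T, t ≤ a) : ∃ C ⊆ T, C.Countable ∧ ∀ t ∈ T, ∃ c ∈ C, t ≤ c :=
  ⟨{a}, singleton_subset_iff.2 ha, countable_singleton a, fun t ht => ⟨a, rfl, h t ht⟩⟩

lemma cof_real : Cof ℝ := by
  intro T
  by_cases hmax : ∃ a ∈ T, ∀ t ∈ T, t ≤ a
  · obtain ⟨a, ha, h⟩ := hmax
    exact cof_of_max ha h
  push Not at hmax
  have : ∀ q : {q : ℚ // ∃ t ∈ T, (q : ℝ) < t}, ∃ t ∈ T, ((q : ℚ) : ℝ) < t := fun q => q.2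
  choose f hfT hf using this
  refine ⟨range f, range_subset_iff.2 hfT, countable_range f, fun t ht => ?_⟩
  obtain ⟨t', ht', h⟩ := hmax t ht
  obtain ⟨q, h1, h2⟩ := exists_rat_btwn h
  exact ⟨_, ⟨⟨q, t', ht', h2⟩, rfl⟩, h1.le.trans (hf ⟨q, t', ht', h2⟩).le⟩

/-- Take a set `T` of sequences without maximum. If the initial segments of every length are
eventually constant along `T`, points where they stabilise are cofinal. Otherwise, from some point
on, the first `n` entries are constant while the `n`-th entry does not stabilise, and a countable
cofinal set of values of that entry suffices. -/
lemma cof_Z : Cof Z := by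
  intro T
  rcases T.eq_empty_or_nonempty with rfl | ⟨t0, ht0⟩
  · exact ⟨∅, subset_rfl, countable_empty, by simp⟩
  by_cases hmax : ∃ a ∈ T, ∀ t ∈ T, t ≤ a
  · obtain ⟨a, ha, h⟩ := hmax
    exact cof_of_max ha h
  push Not at hmax
  -- `n` is stable if the first `n` entries are constant on a final segment of `T`
  by_cases hst : ∀ n, ∃ t ∈ T, ∀ t' ∈ T, t ≤ t' → ∀ j < n, t' j = t j
  · choose f hfT hf using hst
    refine ⟨range f, range_subset_iff.2 hfT, countable_range f, fun t ht => ?_⟩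
    by_contra! hcon
    obtain ⟨t', ht', h⟩ := hmax t ht
    obtain ⟨n, -, hn⟩ := Z_lt.1 h
    have h1 : f (n + 1) ≤ t := (hcon _ ⟨_, rfl⟩).le
    refine hn.ne ?_
    rw [hf (n + 1) t ht h1 n n.lt_succ_self, hf (n + 1) t' ht' (h1.trans h.le) n n.lt_succ_self]
  · push Not at hst
    classical
    have hn := Nat.find_spec hst
    have hmin := fun m => Nat.find_min hst (m := m)
    set n := Nat.find hst
    rcases n with - | n
    · obtain ⟨_, _, _, _, hj, _⟩ := hn t0 ht0
      exact absurd hj (by omega)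
    have := hmin n n.lt_succ_self
    push Not at this
    obtain ⟨s, hs, hsn⟩ := this
    obtain ⟨D, hDR, hD, hcof⟩ := cof_real ((fun t : Z => t n) '' {t | t ∈ T ∧ s ≤ t})
    have : ∀ d : D, ∃ t ∈ T, s ≤ t ∧ t n = d := fun d => by
      obtain ⟨t, ⟨h1, h2⟩, h3⟩ := hDR d.2
      exact ⟨t, h1, h2, h3⟩
    choose f hfT hfs hfn using this
    have : Countable D := hD.to_subtype
    refine ⟨range f, range_subset_iff.2 hfT, countable_range f, fun t ht => ?_⟩
    have hmT : max t s ∈ T := by rcases max_choice t s with h | h <;> rw [h] <;> assumption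
    obtain ⟨t', ht', hle, j, hj, hne⟩ := hn _ hmT
    have hst' : s ≤ t' := (le_max_right _ _).trans hle
    have hlt : max t s < t' := lt_of_le_of_ne hle fun h => hne (by rw [h])
    obtain ⟨k, hk1, hk2⟩ := Z_lt.1 hlt
    have hkn : k = n := by
      by_contra hkn
      rcases lt_or_gt_of_ne hkn with h | h
      · exact hk2.ne ((hsn _ hmT (le_max_right _ _) k h).trans (hsn t' ht' hst' k h).symm)
      · exact hne (hk1 j (by omega)).symm
    subst hkn
    obtain ⟨d, hd, htd⟩ := hcof _ ⟨t', ⟨ht', hst'⟩, rfl⟩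
    refine ⟨_, ⟨⟨d, hd⟩, rfl⟩, (le_max_left t s).trans (le_of_lt (Z_lt.2 ⟨k, fun i hi => ?_, ?_⟩))⟩
    · rw [hsn _ hmT (le_max_right _ _) i hi, hsn _ (hfT _) (hfs _) i hi]
    · rw [hfn]
      exact hk2.trans_le htd

/-- Either the first coordinate attains its maximum on the given set, and the fibre over it decides,
or a countable cofinal set of first coordinates suffices. -/
lemma Cof.prod {P Q : Type*} [LinearOrder P] [LinearOrder Q] (hP : Cof P) (hQ : Cof Q) :
    Cof (P ×ₗ Q) := by
  intro T
  let fst : P ×ₗ Q → P := fun t => (ofLex t).1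
  by_cases hmax : ∃ a ∈ T, ∀ t ∈ T, fst t ≤ fst a
  · obtain ⟨a, ha, hmax⟩ := hmax
    obtain ⟨C, hCT, hC, hcof⟩ := hQ {b | toLex (fst a, b) ∈ T}
    refine ⟨(fun b => toLex (fst a, b)) '' C, image_subset_iff.2 hCT, hC.image _, fun t ht => ?_⟩
    rcases (hmax t ht).lt_or_eq with h | h
    · obtain ⟨c, hc, -⟩ := hcof (ofLex a).2 ha
      exact ⟨_, ⟨c, hc, rfl⟩, le_of_lt (Prod.Lex.lt_iff.2 (Or.inl h))⟩
    · obtain ⟨c, hc, htc⟩ := hcof (ofLex t).2 (show toLex (fst a, (ofLex t).2) ∈ T by rwa [← h])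
      exact ⟨_, ⟨c, hc, rfl⟩, Prod.Lex.le_iff.2 (Or.inr ⟨h, htc⟩)⟩
  · push Not at hmax
    obtain ⟨C, hCT, hC, hcof⟩ := hP (fst '' T)
    choose g hgT hg using fun c : C => hCT c.2
    have : Countable C := hC.to_subtype
    refine ⟨range g, range_subset_iff.2 hgT, countable_range g, fun t ht => ?_⟩
    obtain ⟨t', ht', h⟩ := hmax t ht
    obtain ⟨c, hc, htc⟩ := hcof _ ⟨t', ht', rfl⟩
    refine ⟨_, ⟨⟨c, hc⟩, rfl⟩, le_of_lt (Prod.Lex.lt_iff.2 (Or.inl ?_))⟩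
    exact (h.trans_le htc).trans_eq (hg ⟨c, hc⟩).symm

lemma Z_neg_lt {x y : Z} (h : x < y) : (toLex fun n => - y n : Z) < (toLex fun n => - x n : Z) := by
  obtain ⟨n, h1, h2⟩ := Z_lt.1 h
  exact Z_lt.2 ⟨n, fun j hj => congrArg Neg.neg (h1 j hj).symm, neg_lt_neg h2⟩

/-! ### Dedekind completions as ordered continua -/

noncomputable instance {L : Type*} [LinearOrder L] : TopologicalSpace (DedekindCut L) :=
  Preorder.topology _

instance {L : Type*} [LinearOrder L] : OrderTopology (DedekindCut L) := ⟨rfl⟩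

section Completion

variable {L : Type*} [LinearOrder L]

lemma principal_strictMono : StrictMono (principal : L → DedekindCut L) :=
  (principalEmbedding (α := L)).strictMono

lemma exists_principal_btwn [DenselyOrdered L] {a b : DedekindCut L} (h : a < b) :
    ∃ l : L, a < principal l ∧ principal l < b := by
  obtain ⟨c, h1, h2⟩ := exists_between h
  obtain ⟨l, h3, h4⟩ := lt_iff_exists.1 h1
  exact ⟨l, h3, h4.trans_lt h2⟩

lemma principal_inner [NoMaxOrder L] [NoMinOrder L] (l : L) :
    principal l ∈ Ioo (⊥ : DedekindCut L) ⊤ := by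
  obtain ⟨a, ha⟩ := exists_lt l
  obtain ⟨b, hb⟩ := exists_gt l
  exact ⟨bot_le.trans_lt (principal_strictMono ha), (principal_strictMono hb).trans_le le_top⟩

/-- The neighbourhood filter of a cut is generated by countably many principal cuts cofinal below
it and countably many coinitial above it. -/
lemma firstCountable_cut [DenselyOrdered L] (h1 : Cof L) (h2 : Cof Lᵒᵈ) :
    FirstCountableTopology (DedekindCut L) := by
  refine ⟨fun a => ?_⟩
  rw [nhds_eq_order]
  obtain ⟨C, hC, hCc, hcof⟩ := h1 {l | principal l < a}
  obtain ⟨D, hD, hDc, hcof'⟩ := h2 {l | a < principal (OrderDual.ofDual l)}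
  have e1 : (⨅ b ∈ Iio a, Filter.principal (Ioi b)) =
      ⨅ c : C, Filter.principal (Ioi (principal (c : L))) := by
    refine le_antisymm (le_iInf fun c => iInf₂_le (principal (c : L)) (hC c.2))
      (le_iInf₂ fun b hb => ?_)
    obtain ⟨l, hl1, hl2⟩ := exists_principal_btwn (mem_Iio.1 hb)
    obtain ⟨c, hc, hlc⟩ := hcof l hl2
    refine (iInf_le _ ⟨c, hc⟩).trans (Filter.principal_mono.2 (Ioi_subset_Ioi ?_))
    exact hl1.le.trans (principal_strictMono.monotone hlc)
  have e2 : (⨅ b ∈ Ioi a, Filter.principal (Iio b)) =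
      ⨅ c : D, Filter.principal (Iio (principal (OrderDual.ofDual (c : Lᵒᵈ)))) := by
    refine le_antisymm (le_iInf fun c => iInf₂_le (principal (OrderDual.ofDual (c : Lᵒᵈ)))
      (hD c.2)) (le_iInf₂ fun b hb => ?_)
    obtain ⟨l, hl1, hl2⟩ := exists_principal_btwn (mem_Ioi.1 hb)
    obtain ⟨c, hc, hlc⟩ := hcof' (OrderDual.toDual l) hl1
    refine (iInf_le _ ⟨c, hc⟩).trans (Filter.principal_mono.2 (Iio_subset_Iio ?_))
    exact (principal_strictMono.monotone (OrderDual.ofDual_le_ofDual.2 hlc)).trans hl2.le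
  have : Countable C := hCc.to_subtype
  have : Countable D := hDc.to_subtype
  rw [e1, e2]
  infer_instance

instance [Nonempty L] [NoMaxOrder L] [NoMinOrder L] : Nontrivial (DedekindCut L) :=
  ⟨⊥, ⊤, ((principal_inner (Classical.arbitrary L)).1.trans
    (principal_inner (Classical.arbitrary L)).2).ne⟩

lemma dense_principal [DenselyOrdered L] [Nonempty L] [NoMaxOrder L] [NoMinOrder L] :
    Dense (range (principal : L → DedekindCut L)) :=
  dense_of_exists_between fun _ _ h => by
    obtain ⟨l, h1, h2⟩ := exists_principal_btwn h
    exact ⟨_, ⟨l, rfl⟩, h1, h2⟩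

lemma LFilt.isFilt [DenselyOrdered L] [Nonempty L] [NoMaxOrder L] [NoMinOrder L] {M : W → Set L}
    (hM : LFilt M) : IsFilt fun α => (principal '' M α : Set (DedekindCut L)) where
  mono _ _ h := image_mono (hM.mono h)
  countable α := (hM.countable α).image _
  dense := by
    rw [← image_iUnion, eq_univ_of_forall fun l => mem_iUnion.2 (hM.cover l), image_univ]
    exact dense_principal
  cont δ hδ := by
    rintro _ ⟨l, hl, rfl⟩
    obtain ⟨γ, hγ, h⟩ := hM.cont δ hδ l hl
    exact ⟨γ, hγ, l, h, rfl⟩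
  inner α := by
    rintro _ ⟨l, -, rfl⟩
    exact principal_inner l

/-- The range of a path joining two points contains the interval between them, hence uncountably
many disjoint open sets, which is impossible as `[0, 1]` is separable. -/
lemma totallyPathDisc_cut {L : Type u} [LinearOrder L] [DenselyOrdered L] (h : NC L) :
    TotallyPathDisc (DedekindCut L) := by
  have key : ∀ x y : DedekindCut L, x < y → ¬ Joined x y := by
    rintro x y hxy ⟨γ⟩
    obtain ⟨a, ha, hay⟩ := exists_principal_btwn hxy
    obtain ⟨b, hb, hby⟩ := exists_principal_btwn hay
    obtain ⟨φ, ψ, h1, h2⟩ := h a b (principal_strictMono.lt_iff_lt.1 hb)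
    have hsub : Icc x y ⊆ range γ := (isPreconnected_range γ.continuous).Icc_subset
      ⟨0, γ.source⟩ ⟨1, γ.target⟩
    have hc : Countable W := Pairwise.countable_of_isOpen_disjoint (α := unitInterval)
      (s := fun w => γ ⁻¹' Ioo (principal (φ w)) (principal (ψ w))) ?_
      (fun w => isOpen_Ioo.preimage γ.continuous) fun w => ?_
    · exact not_countable_univ (α := W) countable_univ
    · intro w w' hw
      refine Disjoint.preimage _ (Set.disjoint_left.2 fun z hz hz' => ?_)
      rcases h2 w w' hw with h | h
      · exact (hz.2.trans (principal_strictMono h)).not_gt hz'.1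
      · exact (hz'.2.trans (principal_strictMono h)).not_gt hz.1
    · obtain ⟨z, hz⟩ := exists_between (principal_strictMono (h1 w).2.1)
      have hzI : z ∈ Icc x y :=
        ⟨(ha.trans (principal_strictMono (h1 w).1)).le.trans hz.1.le,
          hz.2.le.trans ((principal_strictMono (h1 w).2.2).trans hby).le⟩
      obtain ⟨t, ht⟩ := hsub hzI
      exact ⟨t, by simpa [ht] using hz⟩
  intro x
  refine Set.eq_singleton_iff_unique_mem.2 ⟨Joined.refl x, fun y hy => ?_⟩
  by_contra hne
  rcases lt_or_gt_of_ne hne with h | h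
  · exact key y x h (Joined.symm hy)
  · exact key x y h hy

end Completion

end OrdCont

namespace OrdCont

open Set DedekindCut

/-! ### Weight -/

/-- A family of disjoint nonempty open sets is no larger than any basis. -/
lemma le_wt {X ι : Type u} [TopologicalSpace X] (U : ι → Set X) (hU : ∀ i, IsOpen (U i))
    (hne : ∀ i, (U i).Nonempty) (hd : ∀ i j, i ≠ j → Disjoint (U i) (U j)) : #ι ≤ wt X := by
  have hn : { c : Cardinal.{u} | ∃ B : Set (Set X),
      TopologicalSpace.IsTopologicalBasis B ∧ #B = c }.Nonempty :=
    ⟨_, _, TopologicalSpace.isTopologicalBasis_opens, rfl⟩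
  obtain ⟨B, hB, hBc⟩ := csInf_mem hn
  change #ι ≤ sInf _
  rw [← hBc]
  choose x hx using hne
  choose b hbB hxb hbU using fun i => hB.exists_subset_of_mem_open (hx i) (hU i)
  refine Cardinal.mk_le_of_injective (f := fun i => (⟨b i, hbB i⟩ : B)) fun i j hij => ?_
  by_contra hne
  have h : b i = b j := congrArg Subtype.val hij
  exact Set.disjoint_left.1 (hd i j hne) (hbU i (hxb i)) (hbU j (h ▸ hxb i))

lemma wt_le {X : Type u} [TopologicalSpace X] {B : Set (Set X)}
    (hB : TopologicalSpace.IsTopologicalBasis B) : wt X ≤ #B :=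
  csInf_le' (show #B ∈ { c : Cardinal.{u} | ∃ B : Set (Set X),
    TopologicalSpace.IsTopologicalBasis B ∧ #B = c } from ⟨B, hB, rfl⟩)

lemma wt_cut_le {L : Type u} [LinearOrder L] [DenselyOrdered L] [Nonempty L] [NoMaxOrder L]
    [NoMinOrder L] {κ : Cardinal.{u}} (hκ : ℵ₀ ≤ κ) (hL : #L ≤ κ) : wt (DedekindCut L) ≤ κ := by
  set T : Set (Set (DedekindCut L)) := Ioi '' range principal ∪ Iio '' range principal with hT
  have hTc : #T ≤ κ := by
    refine (Cardinal.mk_union_le _ _).trans (Cardinal.add_le_of_le hκ ?_ ?_) <;>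
    exact (Cardinal.mk_image_le.trans Cardinal.mk_range_le).trans hL
  have hB := TopologicalSpace.isTopologicalBasis_of_subbasis
    (dense_principal (L := L)).topology_eq_generateFrom
  refine (wt_le hB).trans ?_
  have : #(Finset T) ≤ κ := by
    rcases finite_or_infinite T with h | h
    · exact (Cardinal.mk_le_aleph0).trans hκ
    · rw [Cardinal.mk_finset_of_infinite]; exact hTc
  refine (Cardinal.mk_le_mk_of_subset (t := range fun s : Finset T =>
    ⋂₀ ((Subtype.val : T → Set (DedekindCut L)) '' (s : Set T))) ?_).trans (Cardinal.mk_range_le.trans this)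
  rintro _ ⟨f, ⟨hf, hfT⟩, rfl⟩
  refine ⟨(hf.preimage (f := (Subtype.val : T → Set (DedekindCut L))) Subtype.val_injective.injOn).toFinset, ?_⟩
  have : Subtype.val '' (Subtype.val ⁻¹' f : Set T) = f := by
    rw [Subtype.image_preimage_coe]
    exact inter_eq_right.2 hfT
  simp [this]

/-! ### Bad indices of the completed gadgets -/

variable {S : Set W}

lemma G_cof (S : Set W) : Cof (G S) :=
  (cof_Z.prod cof_Z).pullback (f := fun p : G S => p.1) fun _ _ h => h

lemma G_cof_dual (S : Set W) : Cof (G S)ᵒᵈ := by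
  refine (cof_Z.prod cof_Z).pullback (f := fun p : (G S)ᵒᵈ =>
    (toLex (toLex fun n => - (OrderDual.ofDual p).x n, toLex fun n => - (OrderDual.ofDual p).y n) :
      Z ×ₗ Z)) fun p q h => ?_
  rcases G_lt.1 (OrderDual.ofDual_lt_ofDual.2 h) with h | ⟨h, h'⟩
  · exact Prod.Lex.lt_iff.2 (Or.inl (Z_neg_lt h))
  · refine Prod.Lex.lt_iff.2 (Or.inr ⟨?_, Z_neg_lt h'⟩)
    exact congrArg (fun x : Z => (toLex fun n => - x n : Z)) h.symm

instance (S : Set W) : FirstCountableTopology (DedekindCut (G S)) :=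
  firstCountable_cut (G_cof S) (G_cof_dual S)

/-- The Dedekind completion of the gadget coding `S`: a first countable ordered continuum. -/
abbrev XG (S : Set W) : Type := DedekindCut (G S)

/-- The filtration of the completed gadget. -/
def MX (S : Set W) (α : W) : Set (XG S) := principal '' MG S α

lemma MX_filt (S : Set W) : IsFilt (MX S) := (MG_filt S).isFilt

lemma X_bad {δ : W} (hδ : δ ∈ S) : Bad (MX S) δ := by
  -- an interval with endpoints in `G S` and missing `MG S α` misses the closure of `MX S α` too
  have off : ∀ (α : W) (lo hi : G S), (∀ m ∈ MG S α, ¬ (lo < m ∧ m < hi)) →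
      ∀ z ∈ Ioo (principal lo) (principal hi), z ∉ closure (MX S α) := by
    intro α lo hi h z hz hcl
    obtain ⟨_, ⟨h1, h2⟩, m, hm, rfl⟩ := mem_closure_iff.1 hcl _ isOpen_Ioo hz
    exact h m hm ⟨principal_strictMono.lt_iff_lt.1 h1, principal_strictMono.lt_iff_lt.1 h2⟩
  obtain ⟨l, ⟨lo, hi, h1, h2, h3⟩, h4⟩ := G_bad hδ
  refine ⟨principal l, principal_inner l,
    off δ lo hi h3 _ ⟨principal_strictMono h1, principal_strictMono h2⟩, fun γ hγ => ?_⟩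
  obtain ⟨m, hm, lo, hi, hl, hmi, h⟩ := h4 γ hγ
  refine ⟨principal m, ⟨m, hm, rfl⟩, fun z hz => off γ lo hi h z ?_⟩
  exact ordConnected_Ioo.uIcc_subset ⟨principal_strictMono hl.1, principal_strictMono hl.2⟩
    ⟨principal_strictMono hmi.1, principal_strictMono hmi.2⟩ hz

/-- A witness of badness of `δ ∉ S` could be moved to a nearby point of `G S`; any interval joining
that point to `MG S δ` contains a point of an earlier stage by `G_good`. -/
lemma X_not_bad {δ : W} (hlim : Lim δ) (hδ : δ ∉ S) : ¬ Bad (MX S) δ := by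
  rintro ⟨l, hl, hlM, hlm⟩
  obtain ⟨b, c, hbc, hbcn, hsub⟩ := exists_Icc_mem_subset_of_mem_nhds
    (isClosed_closure.isOpen_compl.mem_nhds hlM)
  obtain ⟨_, hl'bc, l', rfl⟩ := mem_closure_iff_nhds.1 (dense_principal (L := G S) l) _ hbcn
  have hmiss : ∀ z ∈ uIcc (principal l') l, z ∉ closure (MX S δ) := fun z hz =>
    hsub (ordConnected_Icc.uIcc_subset hl'bc hbc hz)
  obtain ⟨γ, hγ, h⟩ := G_good hlim hδ l' fun h =>
    hmiss _ left_mem_uIcc (subset_closure ⟨l', h, rfl⟩)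
  obtain ⟨_, ⟨m, hm, rfl⟩, hmz⟩ := hlm γ hγ
  obtain ⟨m', hm', hm'u⟩ := h m hm
  have hu : principal m' ∈ uIcc (principal l') (principal m) := by
    rcases le_total l' m with h | h
    · rw [uIcc_of_le h] at hm'u
      exact Icc_subset_uIcc ⟨principal_strictMono.monotone hm'u.1,
        principal_strictMono.monotone hm'u.2⟩
    · rw [uIcc_of_ge h] at hm'u
      exact Icc_subset_uIcc' ⟨principal_strictMono.monotone hm'u.1,
        principal_strictMono.monotone hm'u.2⟩
  have hcl : principal m' ∈ closure (MX S γ) := subset_closure ⟨m', hm', rfl⟩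
  rcases uIcc_subset_uIcc_union_uIcc (b := l) hu with h | h
  · exact hmiss _ h (closure_mono ((MX_filt S).mono hγ.le) hcl)
  · exact hmz _ h hcl

/-- A continuous injection between completed gadgets forces containment of the codes modulo thin
sets: off a thin set the bad indices are transferred, and at limits they are the elements of the
code. -/
lemma thin_of_injection {S T : Set W} {f : XG S → XG T} (hf : Continuous f)
    (hi : Function.Injective f) : Thin (S \ T) := by
  obtain ⟨g, hg⟩ := bad_transfer hf hi (MX_filt S) (MX_filt T)
  have hs : ∀ α, ∃ b, α < b ∧ g α < b := fun α => by
    obtain ⟨b, hb⟩ := exists_bound (s := {α, g α}) (by simp)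
    exact ⟨b, hb _ (by simp), hb _ (by simp)⟩
  choose h h1 h2 using hs
  refine ⟨h, fun δ hδ hc => ?_⟩
  refine X_not_bad ⟨hc.1, fun α hα => ⟨h α, hc.2 α hα, h1 α⟩⟩ hδ.2 (hg δ ⟨hc.1, fun α hα => ?_⟩
    (X_bad hδ.1))
  exact (h2 α).trans (hc.2 α hα)

end OrdCont

namespace OrdCont

open Set DedekindCut

/-! ### Embedding a completed cell into a completed sum -/

section CellMap

variable {G' : Type*} {L : Type*} [LinearOrder G'] [LinearOrder L]

/-- The map of completions induced by `e : G' ↪o L`. The join of the images of the elements below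
`u` is the wrong value at `u = ⊥`, where the infimum of the image of `e` is used instead. -/
noncomputable def cellMap (e : G' ↪o L) (u : DedekindCut G') : DedekindCut L :=
  max (⨅ g, principal (e g)) (factorEmbedding (e.trans principalEmbedding) u)

variable (e : G' ↪o L)

lemma factor_principal (g : G') :
    factorEmbedding (e.trans principalEmbedding) (principal g) = principal (e g) := by
  rw [factorEmbedding_principal]
  rfl

lemma cellMap_principal (g : G') : cellMap e (principal g) = principal (e g) := by
  rw [cellMap, factor_principal]
  exact max_eq_right (iInf_le _ g)

lemma cellMap_strictMono [DenselyOrdered G'] [NoMinOrder G'] : StrictMono (cellMap e) := by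
  intro u v h
  obtain ⟨l, h1, h2⟩ := exists_principal_btwn h
  have h3 := (factorEmbedding (e.trans principalEmbedding)).strictMono h1
  have h4 := (factorEmbedding (e.trans principalEmbedding)).strictMono h2
  rw [factor_principal] at h3 h4
  obtain ⟨l', hl'⟩ := exists_lt l
  have h5 : ⨅ g, principal (e g) < principal (e l) :=
    (iInf_le _ l').trans_lt (principal_strictMono (e.strictMono hl'))
  exact (max_lt h5 h3).trans (h4.trans_le (le_max_right _ _))

variable [DenselyOrdered G'] [NoMinOrder G']

lemma cellMap_bot_le {x : DedekindCut L} : cellMap e ⊥ ≤ x ↔ ⨅ g, principal (e g) ≤ x := by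
  refine ⟨(le_max_left _ _).trans, fun h => le_trans (le_iInf fun g => ?_) h⟩
  rw [← cellMap_principal]
  exact (cellMap_strictMono e).monotone bot_le

lemma le_cellMap_top [Nonempty G'] {x : DedekindCut L} :
    x ≤ cellMap e ⊤ ↔ x ≤ ⨆ g, principal (e g) := by
  have h : cellMap e ⊤ = ⨆ g, principal (e g) := by
    refine le_antisymm (max_le (iInf_le_iSup) ?_) (iSup_le fun g => ?_)
    · rw [factorEmbedding_apply]
      refine sSup_le ?_
      rintro _ ⟨g, -, rfl⟩
      exact le_iSup (fun g => principal (e g)) g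
    · rw [← cellMap_principal]
      exact (cellMap_strictMono e).monotone le_top
  rw [h]

/-- If the image of `e` is an interval, the point `x` is the value at the join of the elements whose
images are below `x`. -/
lemma range_cellMap [Nonempty G'] [DenselyOrdered L] (he : (range e).OrdConnected) :
    range (cellMap e) = Icc (cellMap e ⊥) (cellMap e ⊤) := by
  refine subset_antisymm ?_ ?_
  · rintro _ ⟨u, rfl⟩
    exact ⟨(cellMap_strictMono e).monotone bot_le, (cellMap_strictMono e).monotone le_top⟩
  rintro x ⟨hx1, hx2⟩
  have hin : ∀ l, cellMap e ⊥ < principal l → principal l < cellMap e ⊤ → l ∈ range e := by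
    intro l h1 h2
    obtain ⟨g0, h0⟩ := iInf_lt_iff.1 (((cellMap_bot_le e).1 le_rfl).trans_lt h1)
    obtain ⟨g1, h1⟩ := lt_iSup_iff.1 (h2.trans_le ((le_cellMap_top e).1 le_rfl))
    exact he.out ⟨g0, rfl⟩ ⟨g1, rfl⟩ ⟨(principal_lt_principal.1 h0).le,
      (principal_lt_principal.1 h1).le⟩
  refine ⟨sSup (principal '' {g | principal (e g) ≤ x}), le_antisymm ?_ ?_⟩
  · by_contra! h
    obtain ⟨l, h1, h2⟩ := exists_principal_btwn h
    obtain ⟨g, rfl⟩ := hin l (hx1.trans_lt h1)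
      (h2.trans_le ((cellMap_strictMono e).monotone le_top))
    rw [← cellMap_principal, (cellMap_strictMono e).lt_iff_lt, lt_sSup_iff] at h2
    obtain ⟨_, ⟨g', hg', rfl⟩, h3⟩ := h2
    exact (h1.trans (principal_strictMono (e.strictMono (principal_lt_principal.1 h3)))).not_ge hg'
  · by_contra! h
    obtain ⟨l, h1, h2⟩ := exists_principal_btwn h
    obtain ⟨g, rfl⟩ := hin l (((cellMap_strictMono e).monotone bot_le).trans_lt h1)
      (h2.trans_le hx2)
    rw [← cellMap_principal, (cellMap_strictMono e).lt_iff_lt] at h1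
    exact h1.not_ge (le_sSup ⟨g, h2.le, rfl⟩)

end CellMap

end OrdCont

namespace OrdCont

open Set DedekindCut

/-- If the range of `f` is contained in that of `g`, then `f` factors through the embedding `g`. -/
lemma exists_injection {A B Z : Type*} [TopologicalSpace A] [TopologicalSpace B]
    [TopologicalSpace Z] [CompactSpace B] [T2Space Z] {f : A → Z} {g : B → Z}
    (hf : Continuous f) (hfi : Function.Injective f) (hg : Continuous g)
    (hgi : Function.Injective g) (h : range f ⊆ range g) :
    ∃ k : A → B, Continuous k ∧ Function.Injective k := by
  choose k hk using fun a => h ⟨a, rfl⟩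
  refine ⟨k, (hg.isClosedEmbedding hgi).isEmbedding.continuous_iff.2 ?_, fun a b hab => hfi ?_⟩
  · have : g ∘ k = f := funext hk
    rwa [this]
  · rw [← hk a, ← hk b, hab]

/-! ### Lexicographic sums of gadgets -/

lemma mk_LS_le {P : Type u} {c : P → Set W} {κ : Cardinal.{u}} (hκ : ℵ₀ < κ) (hP : #P ≤ κ) : #(Σ p, G (c p)) ≤ κ := by
  have h1 : Cardinal.aleph 1 ≤ κ := by
    rw [← Cardinal.succ_aleph0]
    exact Order.succ_le_of_lt hκ
  rw [Cardinal.mk_sigma]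
  refine (Cardinal.sum_le_sum _ (fun _ : P => Cardinal.aleph 1) fun p => mk_G (c p)).trans ?_
  rw [Cardinal.sum_const]
  simp only [Cardinal.lift_uzero, Cardinal.lift_aleph, Ordinal.lift_one]
  exact (mul_le_mul' hP h1).trans (Cardinal.mul_eq_self hκ.le).le

section Sum

variable {P : Type u} [LinearOrder P] (c : P → Set W)

/-- The lexicographic sum of the gadgets coding the sets `c p`. -/
abbrev LS : Type u := Σₗ p : P, G (c p)

/-- The cell of the sum over `p`. -/
noncomputable def inc (p : P) : G (c p) ↪o LS c :=
  OrderEmbedding.ofStrictMono (fun g => toLex ⟨p, g⟩) fun _ _ h => Sigma.Lex.right _ _ h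

variable {c}

lemma LS_lt_of_fst {z z' : LS c} (h : z.1 < z'.1) : z < z' := Sigma.Lex.lt_def.2 (Or.inl h)

lemma LS_fst_le {z z' : LS c} (h : z ≤ z') : z.1 ≤ z'.1 := by
  rcases Sigma.Lex.le_def.1 h with h | ⟨h, -⟩
  exacts [h.le, h.le]

lemma mem_range_inc {z : LS c} {p : P} : z ∈ range (inc c p) ↔ z.1 = p := by
  constructor
  · rintro ⟨g, rfl⟩
    rfl
  · rintro rfl
    exact ⟨z.2, rfl⟩

lemma inc_ordConnected (p : P) : (range (inc c p)).OrdConnected := by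
  refine ⟨fun x hx y hy z hz => ?_⟩
  rw [mem_range_inc] at *
  exact le_antisymm ((LS_fst_le hz.2).trans_eq hy) (hx.symm.trans_le (LS_fst_le hz.1))

lemma LS_lt_cases {a b : LS c} (h : a < b) :
    a.1 < b.1 ∨ ∃ p, ∃ g g' : G (c p), g < g' ∧ a = inc c p g ∧ b = inc c p g' := by
  obtain ⟨p, g⟩ := a
  obtain ⟨q, g'⟩ := b
  rcases Sigma.Lex.lt_def.1 h with h | ⟨h, h'⟩
  · exact Or.inl h
  · obtain rfl : p = q := h
    exact Or.inr ⟨p, g, g', h', rfl, rfl⟩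

lemma LS_NC : NC (LS c) := by
  -- it suffices to find an interval of a single cell inside the given interval
  have key : ∀ p, ∀ g g' : G (c p), g < g' → ∀ b : LS c, inc c p g' ≤ b → ∃ φ ψ : W → LS c,
      (∀ w, inc c p g < φ w ∧ φ w < ψ w ∧ ψ w < b) ∧
      ∀ w w', w ≠ w' → ψ w < φ w' ∨ ψ w' < φ w := by
    intro p g g' h b hb
    obtain ⟨φ, ψ, h1, h2⟩ := G_NC (c p) g g' h
    refine ⟨fun w => inc c p (φ w), fun w => inc c p (ψ w), fun w => ?_, fun w w' hw => ?_⟩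
    · obtain ⟨h3, h4, h5⟩ := h1 w
      exact ⟨(inc c p).strictMono h3, (inc c p).strictMono h4,
        ((inc c p).strictMono h5).trans_le hb⟩
    · exact (h2 w w' hw).imp (fun h => (inc c p).strictMono h) fun h => (inc c p).strictMono h
  intro a b hab
  rcases LS_lt_cases hab with h | ⟨p, g, g', h, rfl, rfl⟩
  · obtain ⟨p, g⟩ := a
    obtain ⟨g', hg⟩ := exists_gt g
    exact key p g g' hg b (LS_lt_of_fst (z := inc c p g') h).le
  · exact key p g g' h _ le_rfl

lemma LS_cof (h : Cof P) : Cof (LS c) := by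
  refine (h.prod (cof_Z.prod cof_Z)).pullback
    (f := fun z : LS c => (toLex (z.1, z.2.1) : P ×ₗ (Z ×ₗ Z))) fun a b hab => ?_
  rcases LS_lt_cases hab with h | ⟨p, g, g', h, rfl, rfl⟩
  · exact Prod.Lex.lt_iff.2 (Or.inl h)
  · exact Prod.Lex.lt_iff.2 (Or.inr ⟨rfl, h⟩)

lemma LS_cof_dual (h : Cof Pᵒᵈ) : Cof (LS c)ᵒᵈ := by
  refine (h.prod (cof_Z.prod cof_Z)).pullback
    (f := fun z : (LS c)ᵒᵈ => (toLex (OrderDual.toDual (OrderDual.ofDual z).1,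
      toLex (toLex fun n => - (OrderDual.ofDual z).2.x n,
        toLex fun n => - (OrderDual.ofDual z).2.y n)) : Pᵒᵈ ×ₗ (Z ×ₗ Z))) fun a b hab => ?_
  rcases LS_lt_cases (OrderDual.ofDual_lt_ofDual.2 hab) with h | ⟨p, g, g', h, h1, h2⟩
  · exact Prod.Lex.lt_iff.2 (Or.inl h)
  · obtain rfl : b = OrderDual.toDual (inc c p g) := h1
    obtain rfl : a = OrderDual.toDual (inc c p g') := h2
    refine Prod.Lex.lt_iff.2 (Or.inr ⟨rfl, ?_⟩)
    rcases G_lt.1 h with h | ⟨h, h'⟩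
    · exact Prod.Lex.lt_iff.2 (Or.inl (Z_neg_lt h))
    · refine Prod.Lex.lt_iff.2 (Or.inr ⟨?_, Z_neg_lt h'⟩)
      exact congrArg (fun x : Z => (toLex fun n => - x n : Z)) h.symm

/-- The completed cell inside the completed sum. -/
noncomputable abbrev cell (p : P) : XG (c p) → DedekindCut (LS c) := cellMap (inc c p)

lemma cell_range (p : P) : range (cell (c := c) p) = Icc (cell p ⊥) (cell p ⊤) :=
  range_cellMap _ (inc_ordConnected p)

lemma cell_isEmbedding (p : P) : IsEmbedding (cell (c := c) p) :=
  (cellMap_strictMono _).isEmbedding_of_ordConnected (by rw [cell_range]; exact ordConnected_Icc)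

instance connectedSpace_cut {L : Type*} [LinearOrder L] [DenselyOrdered L] :
    ConnectedSpace (DedekindCut L) where
  toNonempty := ⟨⊥⟩

/-- A copy of the gadget `XG S` in the completed sum either contains a cell or is contained in
one: its image is a closed interval, and if this meets two cells in its interior, it contains every
cell between them. -/
lemma cell_dichotomy [DenselyOrdered P] {S : Set W} {f : XG S → DedekindCut (LS c)}
    (hf : Continuous f) (hi : Function.Injective f) :
    ∃ p, (∃ k : XG S → XG (c p), Continuous k ∧ Function.Injective k) ∨
      ∃ k : XG (c p) → XG S, Continuous k ∧ Function.Injective k := by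
  have hr : range f = Icc (sInf (range f)) (sSup (range f)) :=
    eq_Icc_of_connected_compact (isConnected_range hf) (isCompact_range hf)
  have hab : sInf (range f) < sSup (range f) := by
    by_contra! h
    have hs : ∀ u, f u = sInf (range f) := fun u =>
      le_antisymm ((hr.subset ⟨u, rfl⟩).2.trans h) (hr.subset ⟨u, rfl⟩).1
    obtain ⟨u, v, huv⟩ := exists_pair_ne (XG S)
    exact huv (hi ((hs u).trans (hs v).symm))
  set a := sInf (range f)
  set b := sSup (range f)
  by_cases h : ∃ z z' : LS c, z.1 < z'.1 ∧ a < principal z ∧ principal z' < b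
  · obtain ⟨z, z', hz, haz, hzb⟩ := h
    obtain ⟨p, h1, h2⟩ := exists_between hz
    refine ⟨p, Or.inr (exists_injection (cell_isEmbedding p).continuous
      (cell_isEmbedding p).injective hf hi ?_)⟩
    rw [hr, cell_range]
    refine Icc_subset_Icc (haz.le.trans ?_) (le_trans ?_ hzb.le)
    · refine le_trans (le_iInf fun g => ?_) ((cellMap_bot_le _).1 le_rfl)
      exact (principal_strictMono (LS_lt_of_fst h1)).le
    · refine ((le_cellMap_top _).1 le_rfl).trans (iSup_le fun g => ?_)
      exact (principal_strictMono (LS_lt_of_fst h2)).le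
  · push Not at h
    obtain ⟨z, hz1, hz2⟩ := exists_principal_btwn hab
    have hfst : ∀ l : LS c, a < principal l → principal l < b → l ∈ range (inc c z.1) := by
      intro l hl1 hl2
      rw [mem_range_inc]
      rcases lt_trichotomy l.1 z.1 with h' | h' | h'
      · exact absurd hz2 (h _ _ h' hl1).not_gt
      · exact h'
      · exact absurd hl2 (h _ _ h' hz1).not_gt
    obtain ⟨g0, hg0⟩ := hfst z hz1 hz2
    refine ⟨z.1, Or.inl (exists_injection hf hi (cell_isEmbedding z.1).continuous
      (cell_isEmbedding z.1).injective ?_)⟩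
    rw [hr, cell_range]
    refine Icc_subset_Icc ((cellMap_bot_le _).2 ?_) ((le_cellMap_top _).2 ?_)
    · by_contra! hlt
      obtain ⟨l, h1, h2⟩ := exists_principal_btwn hlt
      obtain ⟨g, rfl⟩ := hfst l h1 ((h2.trans_le (iInf_le _ g0)).trans (by rwa [hg0]))
      exact h2.not_ge (iInf_le _ g)
    · by_contra! hlt
      obtain ⟨l, h1, h2⟩ := exists_principal_btwn hlt
      obtain ⟨g, rfl⟩ := hfst l (lt_of_lt_of_le (by rwa [hg0])
        ((le_iSup (fun g => principal (inc c z.1 g)) g0).trans h1.le)) h2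
      exact h1.not_ge (le_iSup (fun g => principal (inc c z.1 g)) g)

lemma le_wt_LS : #P ≤ wt (DedekindCut (LS c)) := by
  choose g g' h using fun p => exists_pair_lt (G (c p))
  refine le_wt (fun p => Ioo (principal (inc c p (g p))) (principal (inc c p (g' p))))
    (fun _ => isOpen_Ioo)
    (fun p => nonempty_Ioo.2 (principal_strictMono ((inc c p).strictMono (h p)))) ?_
  have key : ∀ p q, p < q → ∀ x, x < principal (inc c p (g' p)) →
      principal (inc c q (g q)) < x → False := fun p q hpq x h1 h2 =>
    ((h1.trans (principal_strictMono
      (LS_lt_of_fst (z := inc c p (g' p)) (z' := inc c q (g q)) hpq))).trans h2).false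
  intro p q hpq
  refine Set.disjoint_left.2 fun x hp hq => ?_
  rcases lt_or_gt_of_ne hpq with h | h
  · exact key p q h x hp.2 hq.1
  · exact key q p h x hq.2 hp.1

end Sum

end OrdCont

namespace OrdCont

open Set DedekindCut

/-! ### The family -/

/-- An index set `K` of size `κ`, ordered as a set of reals, with two codes in `2^ℕ` for each element, all distinct. -/
lemma exists_codes {κ : Cardinal.{u}} (h : κ ≤ 𝔠) :
    ∃ (K : Type u) (_ : LinearOrder K) (k : K → ℝ) (lab : K → Bool → (ℕ → Bool)), #K = κ ∧
      StrictMono k ∧ ∀ a b a' b', lab a b = lab a' b' → a = a' ∧ b = b' := by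
  have h1 : Nonempty (κ.out ↪ (ℕ → Bool)) := by
    rw [← Cardinal.lift_mk_le', Cardinal.mk_out]
    simpa using h
  have h2 : Nonempty ((ℕ → Bool) ↪ ℝ) := by
    rw [← Cardinal.lift_mk_le', Cardinal.mk_real]
    simp
  obtain ⟨φ⟩ := h1
  obtain ⟨ρ⟩ := h2
  refine ⟨κ.out, LinearOrder.lift' (fun a => ρ (φ a)) fun a b h => φ.injective (ρ.injective h),
    fun a => ρ (φ a), fun a b n => Nat.casesOn n b (φ a), Cardinal.mk_out κ, fun _ _ h => h,
    fun a b a' b' h => ⟨φ.injective (funext fun n => congrFun h (n + 1)), congrFun h 0⟩⟩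

/-- The labelling of the cells: those indexed by `{k} × ℚ` all carry the code `s k`. The factor `ℚ`
makes the index order dense, so that there is always a whole cell between two cells. -/
abbrev Spread {K : Type u} (s : K → Set W) (p : K ×ₗ ℚ) : Set W := s (ofLex p).1

lemma cof_rat : Cof ℚ := cof_real.pullback Rat.cast_strictMono

lemma cof_index {K : Type u} [LinearOrder K] {k : K → ℝ} (hk : StrictMono k) : Cof (K ×ₗ ℚ) :=
  (cof_real.pullback hk).prod cof_rat

lemma cof_index_dual {K : Type u} [LinearOrder K] {k : K → ℝ} (hk : StrictMono k) :
    Cof (K ×ₗ ℚ)ᵒᵈ := by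
  refine (cof_real.prod cof_rat).pullback (f := fun p : (K ×ₗ ℚ)ᵒᵈ =>
    (toLex (- k (ofLex (OrderDual.ofDual p)).1, - (ofLex (OrderDual.ofDual p)).2) : ℝ ×ₗ ℚ))
    fun p q h => ?_
  rcases Prod.Lex.lt_iff.1 (OrderDual.ofDual_lt_ofDual.2 h) with h | ⟨h, h'⟩
  · exact Prod.Lex.lt_iff.2 (Or.inl (neg_lt_neg (hk h)))
  · exact Prod.Lex.lt_iff.2 (Or.inr ⟨congrArg (fun a => - k a) h.symm, neg_lt_neg h'⟩)

lemma mk_index {K : Type u} {κ : Cardinal.{u}} (hκ : ℵ₀ ≤ κ) (hK : #K = κ) : #(K ×ₗ ℚ) = κ := by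
  change #(K × ℚ) = κ
  rw [Cardinal.mk_prod, hK]
  simpa using Cardinal.mul_aleph0_eq hκ

/-- A gadget coding `s a` embeds in a member of the family only if `s a` is comparable, modulo thin
sets, with one of the codes used there. -/
lemma code_of_embedding {K : Type u} [LinearOrder K] {s t : K → Set W}
    {f : DedekindCut (LS (Spread s)) → DedekindCut (LS (Spread t))} (hf : IsEmbedding f) (a : K) :
    ∃ b, Thin (s a \ t b) ∨ Thin (t b \ s a) := by
  have hc := hf.comp (cell_isEmbedding (c := Spread s) (toLex (a, (0 : ℚ))))
  obtain ⟨p, ⟨k, hk, hki⟩ | ⟨k, hk, hki⟩⟩ := cell_dichotomy hc.continuous hc.injective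
  · exact ⟨_, Or.inl (thin_of_injection hk hki)⟩
  · exact ⟨_, Or.inr (thin_of_injection hk hki)⟩

end OrdCont

/-- For every uncountable `κ ≤ 𝔠` there exist `2 ^ κ` incomparable, totally pathwise
disconnected, first countable linearly ordered continua of weight `κ`. -/
theorem incomparable_first_countable_ordered_continua
    (κ : Cardinal.{u}) (h1 : ℵ₀ < κ) (h2 : κ ≤ 𝔠) :
    ∃ (ι : Type u) (X : ι → TopCat.{u}),
      #ι = 2 ^ κ ∧
      IncompFamily X ∧
      (∀ i, IsContinuum ↥(X i) ∧ IsLOTS ↥(X i) ∧ TotallyPathDisc ↥(X i) ∧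
        FirstCountableTopology ↥(X i) ∧ wt ↥(X i) = κ) := by
  classical
  obtain ⟨K, _, k, lab, hK, hk, hlab⟩ := OrdCont.exists_codes h2
  obtain ⟨S, hS⟩ := OrdCont.exists_family
  -- the choice between the two codes at `a` records whether `a ∈ i`
  let s : Set K → K → Set OrdCont.W := fun i a => S (lab a (decide (a ∈ i)))
  refine ⟨Set K, fun i => TopCat.of (DedekindCut (OrdCont.LS (OrdCont.Spread (s i)))),
    by rw [Cardinal.mk_set, hK], fun i j hij f hf => ?_, fun i => ⟨⟨?_, ?_, ?_, ?_⟩, ?_, ?_, ?_, ?_⟩⟩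
  -- the code used at an element of the symmetric difference occurs in `i` but not in `j`
  · obtain ⟨a, ha⟩ : ∃ a, ¬ (a ∈ i ↔ a ∈ j) := by
      by_contra! h
      exact hij (Set.ext h)
    obtain ⟨b, hb⟩ := OrdCont.code_of_embedding hf a
    have hne : lab a (decide (a ∈ i)) ≠ lab b (decide (b ∈ j)) := fun h => by
      obtain ⟨rfl, h'⟩ := hlab _ _ _ _ h
      exact ha (decide_eq_decide.1 h')
    exact hb.elim (hS _ _ hne) (hS _ _ hne.symm)
  · change CompactSpace (DedekindCut _)
    infer_instance
  · change ConnectedSpace (DedekindCut _)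
    infer_instance
  · change T2Space (DedekindCut _)
    infer_instance
  · obtain ⟨a⟩ : Nonempty K := Cardinal.mk_ne_zero_iff.1 (hK ▸ (Cardinal.aleph0_pos.trans h1).ne')
    have : Nonempty (OrdCont.LS (OrdCont.Spread (s i))) :=
      ⟨OrdCont.inc _ (toLex (a, (0 : ℚ))) (Classical.arbitrary _)⟩
    change Nontrivial (DedekindCut _)
    infer_instance
  · exact ⟨inferInstanceAs (LinearOrder (DedekindCut _)),
      inferInstanceAs (OrderTopology (DedekindCut _))⟩
  · exact OrdCont.totallyPathDisc_cut OrdCont.LS_NC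
  · exact OrdCont.firstCountable_cut (OrdCont.LS_cof (OrdCont.cof_index hk))
      (OrdCont.LS_cof_dual (OrdCont.cof_index_dual hk))
  · have hP := OrdCont.mk_index h1.le hK
    obtain ⟨a⟩ : Nonempty K := Cardinal.mk_ne_zero_iff.1 (hK ▸ (Cardinal.aleph0_pos.trans h1).ne')
    have : Nonempty (OrdCont.LS (OrdCont.Spread (s i))) :=
      ⟨OrdCont.inc _ (toLex (a, (0 : ℚ))) (Classical.arbitrary _)⟩
    refine le_antisymm (OrdCont.wt_cut_le h1.le (OrdCont.mk_LS_le h1 hP.le)) ?_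
    exact hP.symm.le.trans OrdCont.le_wt_LS
end

section
/- Let λ ≤ κ be infinite cardinals with κ^{ℵ₀} = κ. Then there exists a family of 2^κ incomparable linearly ordered continua X such that ŵ(X) = w(X) = κ and |X| = λ^{ν(λ,κ)} for every member X. -/
/-!
Every member of the family is obtained from one large linear order `K` by replacing the points
of a small dense set `E` by copies of a small rigid order `Y_A`, where `A` is a subset of the
initial ordinal `O` of `κ`. Since `#O = κ`, there are `2 ^ κ` sets `A`.

* Base. With `μ = nuC l κ`, let `K` be the lexicographic power `Q ^ μ`, where `Q` consists of the
  `ℕ`-sequences in the initial ordinal of `l` together with a greatest element, and let `E` be the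
  set of eventually least elements of `K` (`exists_base`). Every nontrivial interval of `K` has
  `l ^ μ > κ` points, while `#E ≤ κ` because `l ^ θ ≤ κ` for `θ < μ`. Infima exist in `K` because
  the coordinates of an infimum can be chosen recursively (`lex_isGLB`).
* Fibres. Let `Y` be the order of `ℕ`-sequences in `O` together with a greatest element. Its points
  all have countable right character, and densely many of them have uncountable left character,
  as `κ ^ ℵ₀ = κ` makes the cofinality of `O` uncountable. For `ξ ∈ O`, choose a point of `Y` with
  first entry `ξ` whose left character is uncountable if and only if `ξ ∈ A`, and let `Y_A` arise
  from `Y` by replacing all these points by copies of the reverse of `Y`. The chosen points can be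
  recognized in `Y_A`: they are the junctions between a region looking like `Y` and a region looking
  like its reverse. They form a well-ordered set, so that an isomorphism fixes their indices and
  `A` can be read off (`eq_of_iso`). For the same reason, `Y_A` is not isomorphic to the reverse of
  any `Y_B` (`no_anti_iso`).
* Incomparability. An embedding between connected compact ordered spaces is monotone or antitone
  with convex range. It therefore preserves the relation that the interval between two points has
  at most `κ` points. The classes of this relation are the inserted fibres, as those have at most
  `κ` points and the intervals of `K` have more. Hence an embedding of the continuum of `A` into
  that of `B` yields an isomorphism of `Y_A` onto `Y_B` or its reverse (`fibre_iso`).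
* Weights. The points over `E` form a dense set of size at most `κ`, so the weight is at most `κ`;
  and each nontrivial interval contains `κ` non-overlapping ones, so each nonempty open set has
  weight at least `κ` (`hatWt_eq`).
-/

universe u

open Cardinal Topology

/-- `hatWt X` is the smallest weight of a nonempty open subspace of `X`. -/
noncomputable def hatWt (X : Type u) [TopologicalSpace X] : Cardinal.{u} :=
  sInf { c : Cardinal.{u} | ∃ U : Set X, IsOpen U ∧ U.Nonempty ∧ wt U = c }

/-- `nuC l k` is the smallest cardinal `m` with `l ^ m > k`. -/
noncomputable def nuC (l k : Cardinal.{u}) : Cardinal.{u} :=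
  sInf { m : Cardinal.{u} | k < l ^ m }

namespace HatCont

open Set TopologicalSpace

set_option linter.unusedSectionVars false

/-- Every subset has a greatest lower bound. -/
def GLBs (α : Type u) [Preorder α] : Prop := ∀ s : Set α, ∃ a, IsGLB s a

/-- The complete order structure on a linear order in which all infima exist; the underlying
linear order is the given one. -/
@[reducible] noncomputable def cclo {α : Type u} [L : LinearOrder α] (h : GLBs α) :
    ConditionallyCompleteLinearOrder α :=
  { L, (LinearOrder.toLattice : Lattice α) with
    sInf := fun s => (h s).choose
    sSup := fun s => (h (upperBounds s)).choose
    isLUB_csSup := fun s _ _ => by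
      have h1 := (h (upperBounds s)).choose_spec
      exact ⟨fun a ha => h1.2 fun b hb => hb ha, fun b hb => h1.1 hb⟩
    isGLB_csInf := fun s _ _ => (h s).choose_spec
    csSup_of_not_bddAbove := fun s hs => by
      obtain ⟨t, ht⟩ := h ∅
      exact (hs ⟨t, fun a _ => ht.2 (by simp)⟩).elim
    csInf_of_not_bddBelow := fun s hs => by
      obtain ⟨t, ht⟩ := h univ
      exact (hs ⟨t, fun a _ => ht.1 (mem_univ a)⟩).elim }

/-- The greatest and the least element of a linear order in which all infima exist. -/
@[reducible] noncomputable def bdd {α : Type u} [LinearOrder α] (h : GLBs α) : BoundedOrder α where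
  top := (h ∅).choose
  le_top a := (h ∅).choose_spec.2 (by simp)
  bot := (h univ).choose
  bot_le a := (h univ).choose_spec.1 (mem_univ a)

section top

variable {α β : Type u} [LinearOrder α] [DenselyOrdered α]
  [TopologicalSpace α] [OrderTopology α]

theorem isContinuum_of_glbs [Nontrivial α] (h : GLBs α) : IsContinuum α := by
  let := cclo h
  let := bdd h
  refine ⟨⟨?_⟩, ⟨inferInstance⟩, inferInstance, inferInstance⟩
  rw [← Icc_bot_top]
  exact isCompact_Icc

/-- An embedding of a connected ordered space is monotone or antitone, and its range is convex. -/
theorem embedding_mono [LinearOrder β] [TopologicalSpace β] [OrderTopology β]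
    (h : GLBs α) (f : α → β) (hf : IsEmbedding f) :
    (StrictMono f ∨ StrictAnti f) ∧ (range f).OrdConnected := by
  let := cclo h
  let := bdd h
  exact ⟨hf.continuous.strictMono_of_inj_boundedOrder' hf.injective,
    (isPreconnected_range hf.continuous).ordConnected⟩

end top

/-- `κ` pairwise disjoint nonempty open sets force the weight to be at least `κ`. -/
theorem le_wt {α O : Type u} [TopologicalSpace α] (V : O → Set α) (hV : ∀ i, IsOpen (V i))
    (hne : ∀ i, (V i).Nonempty) (hd : ∀ i j, i ≠ j → Disjoint (V i) (V j)) : #O ≤ wt α := by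
  refine le_csInf ⟨_, _, isTopologicalBasis_opens, rfl⟩ ?_
  rintro c ⟨B, hB, rfl⟩
  have : ∀ i, ∃ b : B, (b : Set α).Nonempty ∧ (b : Set α) ⊆ V i := by
    intro i
    obtain ⟨x, hx⟩ := hne i
    obtain ⟨b, hb, hxb, hbV⟩ := hB.exists_subset_of_mem_open hx (hV i)
    exact ⟨⟨b, hb⟩, ⟨x, hxb⟩, hbV⟩
  choose b hb1 hb2 using this
  refine mk_le_of_injective (f := b) fun i j hij => ?_
  by_contra hne
  obtain ⟨x, hx⟩ := hb1 i
  exact Set.disjoint_left.1 (hd i j hne) (hb2 i hx) (hb2 j (hij ▸ hx))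

theorem wt_le_of_basis {α : Type u} [TopologicalSpace α] {B : Set (Set α)}
    (hB : IsTopologicalBasis B) : wt α ≤ #B :=
  csInf_le' ⟨B, hB, rfl⟩

/-- The rays with endpoints in an order-dense set form a subbase. -/
theorem exists_basis {α : Type u} [LinearOrder α] [DenselyOrdered α] [Nontrivial α]
    [TopologicalSpace α] [OrderTopology α] {κ : Cardinal.{u}} (hκ : ℵ₀ ≤ κ)
    (D : Set α) (hD : #D ≤ κ) (hdense : ∀ a b : α, a < b → ∃ d ∈ D, a < d ∧ d < b) :
    ∃ B : Set (Set α), IsTopologicalBasis B ∧ #B ≤ κ := by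
  have hd : Dense D := dense_of_exists_between fun {a b} hab => by
    obtain ⟨d, hd, h1, h2⟩ := hdense a b hab
    exact ⟨d, hd, h1, h2⟩
  refine ⟨_, isTopologicalBasis_of_subbasis hd.topology_eq_generateFrom, ?_⟩
  have hS : #(Ioi '' D ∪ Iio '' D : Set (Set α)) ≤ κ :=
    (mk_union_le _ _).trans (add_le_of_le hκ (mk_image_le.trans hD) (mk_image_le.trans hD))
  refine mk_image_le.trans ?_
  have : #{f : Set (Set α) | f.Finite ∧ f ⊆ Ioi '' D ∪ Iio '' D} ≤
      #(Finset (Ioi '' D ∪ Iio '' D : Set (Set α))) := by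
    classical
    refine mk_le_of_surjective (f := fun F => ⟨Subtype.val '' (F : Set _),
      (F.finite_toSet.image _), by rintro _ ⟨x, _, rfl⟩; exact x.2⟩) ?_
    rintro ⟨f, hf, hfs⟩
    refine ⟨(hf.preimage Subtype.val_injective.injOn).toFinset, ?_⟩
    ext x
    simp only [Finite.coe_toFinset, mem_image, mem_preimage, Subtype.exists, exists_and_right,
      exists_eq_right]
    exact ⟨fun ⟨_, h⟩ => h, fun h => ⟨hfs h, h⟩⟩
  refine this.trans ?_
  rcases finite_or_infinite (Ioi '' D ∪ Iio '' D : Set (Set α)) with hfin | hinf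
  · exact (lt_aleph0_of_finite _).le.trans hκ
  · rw [mk_finset_of_infinite]; exact hS

/-- The dense set `D` bounds the weight from above; the non-overlapping intervals bound the weight
of each nonempty open set from below. -/
theorem hatWt_eq {α : Type u} [LinearOrder α] [DenselyOrdered α] [Nontrivial α]
    [TopologicalSpace α] [OrderTopology α] {κ : Cardinal.{u}} (hκ : ℵ₀ ≤ κ)
    (D : Set α) (hD : #D ≤ κ) (hdense : ∀ a b : α, a < b → ∃ d ∈ D, a < d ∧ d < b)
    {O : Type u} (hO : #O = κ)
    (hc : ∀ a b : α, a < b → ∃ f g : O → α, (∀ i, a ≤ f i ∧ f i < g i ∧ g i ≤ b) ∧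
      ∀ i j, i ≠ j → g i ≤ f j ∨ g j ≤ f i) :
    hatWt α = κ ∧ wt α = κ := by
  obtain ⟨B, hB, hBκ⟩ := exists_basis hκ D hD hdense
  have key : ∀ U : Set α, IsOpen U → U.Nonempty → κ ≤ wt U := by
    intro U hU hne
    obtain ⟨a, b, hab, hU'⟩ := hU.exists_Ioo_subset hne
    obtain ⟨f, g, h1, h2⟩ := hc a b hab
    rw [← hO]
    have hsub : ∀ i, Ioo (f i) (g i) ⊆ U := fun i =>
      (Ioo_subset_Ioo (h1 i).1 (h1 i).2.2).trans hU'
    refine le_wt (fun i => (Subtype.val ⁻¹' Ioo (f i) (g i) : Set U))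
      (fun i => isOpen_Ioo.preimage continuous_subtype_val) (fun i => ?_) (fun i j hij => ?_)
    · obtain ⟨x, hx⟩ := exists_between (h1 i).2.1
      exact ⟨⟨x, hsub i hx⟩, hx⟩
    · rw [Set.disjoint_left]
      rintro x hx hy
      rcases h2 i j hij with h | h
      · exact absurd (hx.2.trans_le h) (not_lt.2 hy.1.le)
      · exact absurd (hy.2.trans_le h) (not_lt.2 hx.1.le)
  have hle : ∀ U : Set α, wt U ≤ κ := fun U =>
    (wt_le_of_basis (hB.induced (Subtype.val : U → α))).trans (mk_image_le.trans hBκ)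
  refine ⟨le_antisymm ?_ ?_, le_antisymm ((wt_le_of_basis hB).trans hBκ) ?_⟩
  · have : hatWt α ≤ wt (univ : Set α) :=
      csInf_le' ⟨univ, isOpen_univ, univ_nonempty, rfl⟩
    exact this.trans (hle univ)
  · refine le_csInf ⟨_, univ, isOpen_univ, univ_nonempty, rfl⟩ ?_
    rintro c ⟨U, hU, hne, rfl⟩
    exact key U hU hne
  · obtain ⟨x, y, hxy⟩ := exists_pair_lt α
    obtain ⟨f, g, h1, h2⟩ := hc x y hxy
    rw [← hO]
    refine le_wt (fun i => Ioo (f i) (g i)) (fun i => isOpen_Ioo)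
      (fun i => nonempty_Ioo.2 (h1 i).2.1) (fun i j hij => ?_)
    rw [Set.disjoint_left]
    rintro x hx hy
    rcases h2 i j hij with h | h
    · exact absurd (hx.2.trans_le h) (not_lt.2 hy.1.le)
    · exact absurd (hy.2.trans_le h) (not_lt.2 hx.1.le)

/-! ### Points of uncountable one-sided character -/

/-- `x` has uncountable left character: no countable set of points below `x` is cofinal
below `x`. (The least element does not qualify, because of the empty set.) -/
def LU {α : Type u} [Preorder α] (x : α) : Prop :=
  ∀ t : Set α, t.Countable → (∀ z ∈ t, z < x) → ∃ y < x, ∀ z ∈ t, z < y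

/-- `x` has uncountable right character. -/
def RU {α : Type u} [Preorder α] (x : α) : Prop :=
  ∀ t : Set α, t.Countable → (∀ z ∈ t, x < z) → ∃ y, x < y ∧ ∀ z ∈ t, y < z

/-- `x` separates a left neighbourhood without points of uncountable right character from a right
neighbourhood without points of uncountable left character. -/
def Junc {α : Type u} [Preorder α] (x : α) : Prop :=
  (∃ a < x, ∀ y, a < y → y < x → ¬ RU y) ∧ ∃ b, x < b ∧ ∀ y, x < y → y < b → ¬ LU y

section iso

variable {α β : Type u} [Preorder α] [Preorder β]

theorem LU.dual {x : α} (h : LU x) : RU (OrderDual.toDual x) := h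
theorem RU.dual {x : α} (h : RU x) : LU (OrderDual.toDual x) := h

theorem LU.map (φ : α ≃o β) {x : α} (h : LU x) : LU (φ x) := by
  intro t ht htx
  obtain ⟨y, hy, hyt⟩ := h (φ.symm '' t) (ht.image _) (by
    rintro _ ⟨z, hz, rfl⟩
    exact φ.symm_apply_lt.2 (htx z hz))
  refine ⟨φ y, φ.lt_iff_lt.2 hy, fun z hz => ?_⟩
  exact φ.symm_apply_lt.1 (hyt _ ⟨z, hz, rfl⟩)

theorem RU.map (φ : α ≃o β) {x : α} (h : RU x) : RU (φ x) := LU.map φ.dual h.dual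

theorem LU_map (φ : α ≃o β) {x : α} : LU (φ x) ↔ LU x :=
  ⟨fun h => by simpa using h.map φ.symm, LU.map φ⟩

theorem RU_map (φ : α ≃o β) {x : α} : RU (φ x) ↔ RU x :=
  ⟨fun h => by simpa using h.map φ.symm, RU.map φ⟩

theorem Junc.map (φ : α ≃o β) {x : α} (h : Junc x) : Junc (φ x) := by
  obtain ⟨⟨a, ha, h1⟩, b, hb, h2⟩ := h
  refine ⟨⟨φ a, φ.lt_iff_lt.2 ha, fun y hy hy' hR => ?_⟩, φ b, φ.lt_iff_lt.2 hb,
    fun y hy hy' hL => ?_⟩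
  · exact h1 (φ.symm y) (φ.lt_symm_apply.2 hy) (φ.symm_apply_lt.2 hy') (hR.map φ.symm)
  · exact h2 (φ.symm y) (φ.lt_symm_apply.2 hy) (φ.symm_apply_lt.2 hy') (hL.map φ.symm)

theorem Junc.dual {x : α} (h : Junc x) : Junc (OrderDual.toDual x) := by
  obtain ⟨⟨a, ha, h1⟩, b, hb, h2⟩ := h
  exact ⟨⟨OrderDual.toDual b, hb, fun y hy hy' hR => h2 y hy' hy hR⟩,
    OrderDual.toDual a, ha, fun y hy hy' hL => h1 y hy' hy hL⟩

theorem Junc_map (φ : α ≃o β) {x : α} : Junc (φ x) ↔ Junc x :=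
  ⟨fun h => by simpa using h.map φ.symm, Junc.map φ⟩

end iso

/-! ### Replacing points of an order by copies of another order -/

/-- The order obtained from `C` by replacing each point of `S` by a copy of `H`: a suborder of the
lexicographic product of `C` and `H`. -/
abbrev Ins {C : Type u} (S : Set C) (H : Type u) [LinearOrder C] [LinearOrder H] [OrderBot H] :
    Type u :=
  {p : C ×ₗ H // (ofLex p).1 ∈ S ∨ (ofLex p).2 = ⊥}

namespace Ins

variable {C H : Type u} [LinearOrder C] [LinearOrder H] [OrderBot H] {S : Set C}

/-- The base point of an element of `Ins S H`. -/
def fst (x : Ins S H) : C := (ofLex x.1).1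
/-- The position of an element of `Ins S H` in its fibre. -/
def snd (x : Ins S H) : H := (ofLex x.1).2

/-- The element of `Ins S H` over `c` in position `h`. -/
def mk (c : C) (h : H) (hc : c ∈ S ∨ h = ⊥) : Ins S H := ⟨toLex (c, h), hc⟩

@[simp] theorem fst_mk (c : C) (h : H) (hc : c ∈ S ∨ h = ⊥) : fst (mk c h hc) = c := rfl
@[simp] theorem snd_mk (c : C) (h : H) (hc : c ∈ S ∨ h = ⊥) : snd (mk c h hc) = h := rfl

theorem prop (x : Ins S H) : x.fst ∈ S ∨ x.snd = ⊥ := x.2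

theorem le_iff {x y : Ins S H} : x ≤ y ↔ x.fst < y.fst ∨ x.fst = y.fst ∧ x.snd ≤ y.snd :=
  Prod.Lex.le_iff (x := x.1) (y := y.1)

theorem lt_iff {x y : Ins S H} : x < y ↔ x.fst < y.fst ∨ x.fst = y.fst ∧ x.snd < y.snd :=
  Prod.Lex.lt_iff (x := x.1) (y := y.1)

theorem ext' {x y : Ins S H} (h1 : x.fst = y.fst) (h2 : x.snd = y.snd) : x = y :=
  le_antisymm (le_iff.2 (.inr ⟨h1, h2.le⟩)) (le_iff.2 (.inr ⟨h1.symm, h2.ge⟩))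

theorem fst_mono {x y : Ins S H} (h : x ≤ y) : x.fst ≤ y.fst := by
  rcases le_iff.1 h with h | h
  · exact h.le
  · exact h.1.le

/-- The least element over `c`. -/
def base (S : Set C) (H : Type u) [LinearOrder H] [OrderBot H] (c : C) : Ins S H :=
  mk c ⊥ (.inr rfl)

@[simp] theorem fst_base (c : C) : (base S H c).fst = c := rfl
@[simp] theorem snd_base (c : C) : (base S H c).snd = ⊥ := rfl

theorem base_le (x : Ins S H) : base S H x.fst ≤ x := le_iff.2 (.inr ⟨rfl, bot_le⟩)

theorem base_strictMono : StrictMono (base S H) := fun _ _ h => lt_iff.2 (.inl h)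

instance [OrderBot C] : OrderBot (Ins S H) where
  bot := base S H ⊥
  bot_le x := (base_strictMono.monotone bot_le).trans (base_le x)

/-- The fibre over a point of `S`. -/
def fib {c : C} (hc : c ∈ S) (h : H) : Ins S H := mk c h (.inl hc)

@[simp] theorem fst_fib {c : C} (hc : c ∈ S) (h : H) : (fib hc h).fst = c := rfl
@[simp] theorem snd_fib {c : C} (hc : c ∈ S) (h : H) : (fib hc h).snd = h := rfl

@[simp] theorem fib_lt_fib {c : C} (hc : c ∈ S) {h k : H} : fib hc h < fib hc k ↔ h < k := by
  simp [lt_iff]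

@[simp] theorem fib_le_fib {c : C} (hc : c ∈ S) {h k : H} : fib hc h ≤ fib hc k ↔ h ≤ k := by
  simp [le_iff]

theorem eq_fib {c : C} (hc : c ∈ S) {x : Ins S H} (hx : x.fst = c) : x = fib hc x.snd :=
  ext' hx rfl

theorem glbs (hC : GLBs C) (hH : GLBs H) : GLBs (Ins S H) := by
  intro s
  obtain ⟨c, hc⟩ := hC (fst '' s)
  have hlow : ∀ x ∈ s, c ≤ x.fst := fun x hx => hc.1 ⟨x, hx, rfl⟩
  have hgr : ∀ y ∈ lowerBounds s, y.fst ≤ c := fun y hy =>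
    hc.2 (by rintro _ ⟨x, hx, rfl⟩; exact fst_mono (hy hx))
  by_cases hcS : c ∈ S
  · obtain ⟨h, hh⟩ := hH (snd '' {x ∈ s | x.fst = c})
    refine ⟨fib hcS h, fun x hx => ?_, fun y hy => ?_⟩
    · rcases (hlow x hx).lt_or_eq with h1 | h1
      · exact le_iff.2 (.inl h1)
      · exact le_iff.2 (.inr ⟨h1, hh.1 ⟨x, ⟨hx, h1.symm⟩, rfl⟩⟩)
    · rcases (hgr y hy).lt_or_eq with h1 | h1
      · exact le_iff.2 (.inl h1)
      · refine le_iff.2 (.inr ⟨h1, hh.2 ?_⟩)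
        rintro _ ⟨x, ⟨hx, hxc⟩, rfl⟩
        rcases le_iff.1 (hy hx) with h2 | h2
        · exact absurd (h1.trans hxc.symm) h2.ne
        · exact h2.2
  · refine ⟨base S H c, fun x hx => ?_, fun y hy => ?_⟩
    · exact (base_strictMono.monotone (hlow x hx)).trans (base_le x)
    · rcases (hgr y hy).lt_or_eq with h1 | h1
      · exact le_iff.2 (.inl h1)
      · refine le_iff.2 (.inr ⟨h1, ?_⟩)
        rcases y.prop with h2 | h2
        · exact absurd (h1 ▸ h2) hcS
        · rw [h2]; exact bot_le

instance [DenselyOrdered C] [DenselyOrdered H] : DenselyOrdered (Ins S H) := by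
  refine ⟨fun x y hxy => ?_⟩
  rcases lt_iff.1 hxy with h | ⟨h1, h2⟩
  · obtain ⟨c, hc, hc'⟩ := exists_between h
    exact ⟨base S H c, lt_iff.2 (.inl hc), lt_iff.2 (.inl hc')⟩
  · obtain ⟨h, hh, hh'⟩ := exists_between h2
    have hS : x.fst ∈ S := by
      rcases y.prop with h3 | h3
      · exact h1 ▸ h3
      · exact absurd (h3 ▸ h2) not_lt_bot
    exact ⟨fib hS h, lt_iff.2 (.inr ⟨rfl, hh⟩), lt_iff.2 (.inr ⟨h1, hh'⟩)⟩

instance [Nontrivial C] : Nontrivial (Ins S H) :=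
  (base_strictMono (S := S) (H := H)).injective.nontrivial

theorem card_le : #(Ins S H) ≤ #C * #H := by
  refine (mk_le_of_injective (f := fun x : Ins S H => (x.fst, x.snd))
    fun x y h => ext' (congrArg Prod.fst h) (congrArg Prod.snd h)).trans_eq ?_
  rw [mk_prod, lift_id, lift_id]

theorem mem_of_fst_eq {x y : Ins S H} (h : x < y) (h1 : x.fst = y.fst) : y.fst ∈ S := by
  rcases y.prop with h3 | h3
  · exact h3
  · rcases lt_iff.1 h with h2 | h2
    · exact absurd h1 h2.ne
    · exact absurd (h3 ▸ h2.2) not_lt_bot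

theorem LU_base [DenselyOrdered C] {c : C} : LU (base S H c) ↔ LU c := by
  constructor
  · intro h t ht htc
    obtain ⟨y, hy, hyt⟩ := h (base S H '' t) (ht.image _)
      (by rintro _ ⟨z, hz, rfl⟩; exact base_strictMono (htc z hz))
    have hyc : y.fst < c := by
      rcases lt_iff.1 hy with h1 | h1
      · exact h1
      · exact absurd h1.2 not_lt_bot
    obtain ⟨d, hd, hdc⟩ := exists_between hyc
    exact ⟨d, hdc, fun z hz => (fst_mono (hyt _ ⟨z, hz, rfl⟩).le).trans_lt hd⟩
  · intro h t ht htc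
    obtain ⟨y, hy, hyt⟩ := h (fst '' t) (ht.image _) (by
      rintro _ ⟨z, hz, rfl⟩
      rcases lt_iff.1 (htc z hz) with h1 | h1
      · exact h1
      · exact absurd h1.2 not_lt_bot)
    exact ⟨base S H y, base_strictMono hy, fun z hz => lt_iff.2 (.inl (hyt _ ⟨z, hz, rfl⟩))⟩

theorem not_RU_base {c : C} (hc : c ∉ S) (hR : ¬ RU c) : ¬ RU (base S H c) := by
  intro h
  refine hR fun t ht htc => ?_
  obtain ⟨y, hy, hyt⟩ := h (base S H '' t) (ht.image _)
      (by rintro _ ⟨z, hz, rfl⟩; exact base_strictMono (htc z hz))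
  have hyc : c < y.fst := by
    rcases lt_iff.1 hy with h1 | h1
    · exact h1
    · have h2 := mem_of_fst_eq hy h1.1
      rw [← h1.1] at h2
      exact absurd h2 hc
  refine ⟨y.fst, hyc, fun z hz => ?_⟩
  rcases lt_iff.1 (hyt _ ⟨z, hz, rfl⟩) with h1 | h1
  · exact h1
  · exact absurd h1.2 not_lt_bot

theorem LU_fib {c : C} (hc : c ∈ S) {h : H} (h0 : ⊥ < h) (hL : LU (fib hc h)) : LU h := by
  intro t ht hth
  obtain ⟨y, hy, hyt⟩ := hL (fib hc '' insert ⊥ t) ((ht.insert _).image _) (by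
    rintro _ ⟨z, hz, rfl⟩
    refine (fib_lt_fib hc).2 ?_
    rcases hz with rfl | hz
    · exact h0
    · exact hth z hz)
  have hyc : y.fst = c :=
    le_antisymm (fst_mono hy.le) (fst_mono (hyt _ ⟨⊥, .inl rfl, rfl⟩).le)
  rw [eq_fib hc hyc] at hy hyt
  exact ⟨y.snd, (fib_lt_fib hc).1 hy,
    fun z hz => (fib_lt_fib hc).1 (hyt _ ⟨z, .inr hz, rfl⟩)⟩

theorem RU_fib {c : C} (hc : c ∈ S) {h k : H} (h0 : h < k) (hR : RU h) : RU (fib hc h) := by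
  intro t ht hth
  obtain ⟨y, hy, hyt⟩ := hR (insert k (snd '' {x ∈ t | x.fst = c}))
    (((ht.mono (sep_subset _ _)).image _).insert _) (by
      rintro z (rfl | ⟨x, ⟨hx, hxc⟩, rfl⟩)
      · exact h0
      · have := hth x hx
        rw [eq_fib hc hxc] at this
        exact (fib_lt_fib hc).1 this)
  refine ⟨fib hc y, (fib_lt_fib hc).2 hy, fun z hz => ?_⟩
  rcases lt_iff.1 (hth z hz) with h1 | h1
  · exact lt_iff.2 (.inl h1)
  · exact lt_iff.2 (.inr ⟨h1.1, hyt _ (.inr ⟨z, ⟨hz, h1.1.symm⟩, rfl⟩)⟩)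

end Ins

/-! ### Cellularity of intervals -/

/-- Every nontrivial interval contains a family, indexed by `O`, of non-overlapping nontrivial
intervals. -/
def Cel (O α : Type u) [LinearOrder α] : Prop :=
  ∀ a b : α, a < b → ∃ f g : O → α, (∀ i, a ≤ f i ∧ f i < g i ∧ g i ≤ b) ∧
      ∀ i j, i ≠ j → g i ≤ f j ∨ g j ≤ f i

theorem Cel.dual {O α : Type u} [LinearOrder α] (h : Cel O α) : Cel O αᵒᵈ := by
  intro a b hab
  obtain ⟨f, g, h1, h2⟩ := h (OrderDual.ofDual b) (OrderDual.ofDual a) hab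
  exact ⟨fun i => OrderDual.toDual (g i), fun i => OrderDual.toDual (f i),
    fun i => ⟨(h1 i).2.2, (h1 i).2.1, (h1 i).1⟩, fun i j hij => (h2 i j hij).symm⟩

theorem Cel.ins {O C H : Type u} [LinearOrder C] [LinearOrder H] [OrderBot H] {S : Set C}
    (hH : Cel O H)
    (hC : ∀ x y : Ins S H, x.fst < y.fst → ∃ f g : O → Ins S H,
      (∀ i, x ≤ f i ∧ f i < g i ∧ g i ≤ y) ∧ ∀ i j, i ≠ j → g i ≤ f j ∨ g j ≤ f i) :
    Cel O (Ins S H) := by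
  intro x y hxy
  rcases Ins.lt_iff.1 hxy with h | h
  · exact hC x y h
  · have hS := Ins.mem_of_fst_eq hxy h.1
    obtain ⟨f, g, h1, h2⟩ := hH _ _ h.2
    refine ⟨fun i => Ins.fib hS (f i), fun i => Ins.fib hS (g i), fun i => ?_, fun i j hij => ?_⟩
    · have hx : x = Ins.fib hS x.snd := Ins.eq_fib hS h.1
      have hy : y = Ins.fib hS y.snd := Ins.eq_fib hS rfl
      exact ⟨hx.le.trans ((Ins.fib_le_fib hS).2 (h1 i).1), (Ins.fib_lt_fib hS).2 (h1 i).2.1,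
        ((Ins.fib_le_fib hS).2 (h1 i).2.2).trans hy.ge⟩
    · simpa using h2 i j hij

/-- Non-overlapping intervals in `C` give non-overlapping intervals in `Ins S H`. -/
theorem Cel.ins_of_base {O C H : Type u} [LinearOrder C] [DenselyOrdered C]
    [LinearOrder H] [OrderBot H] {S : Set C}
    (hC : Cel O C) (hH : Cel O H) : Cel O (Ins S H) := by
  refine hH.ins fun x y hxy => ?_
  obtain ⟨c, hc, hc'⟩ := exists_between hxy
  obtain ⟨f, g, h1, h2⟩ := hC c y.fst hc'
  refine ⟨fun i => Ins.base S H (f i), fun i => Ins.base S H (g i), fun i => ⟨?_, ?_, ?_⟩,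
    fun i j hij => ?_⟩
  · exact Ins.le_iff.2 (.inl (hc.trans_le (h1 i).1))
  · exact Ins.base_strictMono (h1 i).2.1
  · exact (Ins.base_strictMono.monotone (h1 i).2.2).trans (Ins.base_le y)
  · exact (h2 i j hij).imp (fun h => Ins.base_strictMono.monotone h)
      fun h => Ins.base_strictMono.monotone h

/-- If `S` is order-dense in `C`, then the intervals of the inserted copies of `H` suffice. -/
theorem Cel.ins_of_dense {O C H : Type u} [LinearOrder C]
    [LinearOrder H] [OrderBot H] [Nontrivial H] {S : Set C}
    (hS : ∀ a b : C, a < b → ∃ d ∈ S, a < d ∧ d < b) (hH : Cel O H) : Cel O (Ins S H) := by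
  refine hH.ins fun x y hxy => ?_
  obtain ⟨d, hd, h1, h2⟩ := hS _ _ hxy
  obtain ⟨u, v, huv⟩ := exists_pair_lt H
  obtain ⟨f, g, h3, h4⟩ := hH u v huv
  refine ⟨fun i => Ins.fib hd (f i), fun i => Ins.fib hd (g i), fun i => ⟨?_, ?_, ?_⟩,
    fun i j hij => by simpa using h4 i j hij⟩
  · exact Ins.le_iff.2 (.inl h1)
  · simpa using (h3 i).2.1
  · exact Ins.le_iff.2 (.inl h2)

/-! ### Points at small distance -/

/-- The points separated from `x` by an interval of at most `κ` points. -/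
def cls {α : Type u} [LinearOrder α] (κ : Cardinal.{u}) (x : α) : Set α :=
  {y | #(uIcc x y) ≤ κ}

/-- Monotone and antitone injections with convex range preserve the relation of being at small
distance. The points `a` and `b`, which are not close to `x`, ensure that the class of `f x` does
not leave the range of `f`. -/
theorem image_cls {α β : Type u} [LinearOrder α] [LinearOrder β] {κ : Cardinal.{u}} {f : α → β}
    (hf : StrictMono f ∨ StrictAnti f) (hr : (range f).OrdConnected) {a x b : α}
    (hax : a < x) (hxb : x < b) (ha : a ∉ cls κ x) (hb : b ∉ cls κ x) :
    f '' cls κ x = cls κ (f x) := by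
  have hinj : Function.Injective f := hf.elim StrictMono.injective StrictAnti.injective
  have him : ∀ x y, f '' uIcc x y = uIcc (f x) (f y) := by
    intro x y
    refine subset_antisymm ?_ fun z hz => ?_
    · rintro _ ⟨z, hz, rfl⟩
      rcases hf with hf | hf
      · exact hf.monotone.image_uIcc_subset ⟨z, hz, rfl⟩
      · exact hf.antitone.image_uIcc_subset ⟨z, hz, rfl⟩
    · obtain ⟨w, rfl⟩ := hr.uIcc_subset ⟨x, rfl⟩ ⟨y, rfl⟩ hz
      refine ⟨w, ?_, rfl⟩
      rw [mem_uIcc] at hz ⊢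
      rcases hf with hf | hf
      · simpa [hf.le_iff_le] using hz
      · simpa [hf.le_iff_ge, and_comm, or_comm] using hz
  have hcard : ∀ x y, #(uIcc (f x) (f y)) = #(uIcc x y) := fun x y => by
    rw [← him, mk_image_eq hinj]
  apply subset_antisymm
  · rintro _ ⟨y, hy, rfl⟩
    exact (hcard x y).le.trans hy
  · intro z hz
    by_cases hzr : z ∈ range f
    · obtain ⟨y, rfl⟩ := hzr
      exact ⟨y, (hcard x y).ge.trans hz, rfl⟩
    · exfalso
      have hz1 : z ∉ uIcc (f a) (f b) := fun h => hzr (hr.uIcc_subset ⟨a, rfl⟩ ⟨b, rfl⟩ h)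
      have hx1 : f x ∈ uIcc (f a) (f b) :=
        him a b ▸ ⟨x, by rw [uIcc_of_le (hax.trans hxb).le]; exact ⟨hax.le, hxb.le⟩, rfl⟩
      have : f a ∈ uIcc (f x) z ∨ f b ∈ uIcc (f x) z := by
        simp only [mem_uIcc] at hz1 hx1 ⊢
        grind
      rcases this with h | h
      · refine ha ((hcard x a).ge.trans ((mk_le_mk_of_subset ?_).trans hz))
        exact uIcc_subset_uIcc left_mem_uIcc h
      · refine hb ((hcard x b).ge.trans ((mk_le_mk_of_subset ?_).trans hz))
        exact uIcc_subset_uIcc left_mem_uIcc h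

/-! ### Lexicographic powers -/

section lex

variable {I Q : Type*} [LinearOrder I] [WellFoundedLT I] [LinearOrder Q]

theorem lex_lt {a b : Lex (I → Q)} : a < b ↔ ∃ i, (∀ j < i, a j = b j) ∧ a i < b i := Iff.rfl

/-- The coordinates of an infimum can be chosen recursively. -/
theorem lex_isGLB {S : Set (Lex (I → Q))} {f : Lex (I → Q)}
    (h : ∀ i, IsGLB {q | ∃ g ∈ S, (∀ j < i, g j = f j) ∧ g i = q} (f i)) : IsGLB S f := by
  refine ⟨fun g hg => ?_, fun k hk => ?_⟩
  · by_contra hlt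
    obtain ⟨i, h1, h2⟩ := lex_lt.1 (not_le.1 hlt)
    exact absurd ((h i).1 ⟨g, hg, h1, rfl⟩) (not_le.2 h2)
  · by_contra hlt
    obtain ⟨i, h1, h2⟩ := lex_lt.1 (not_le.1 hlt)
    refine absurd ((h i).2 ?_) (not_le.2 h2)
    rintro _ ⟨g, hg, hgj, rfl⟩
    by_contra hgi
    exact absurd (hk hg) (not_le.2 (lex_lt.2 ⟨i, fun j hj => (hgj j hj).trans (h1 j hj),
      not_le.1 hgi⟩))

theorem lex_rec (S : Set (Lex (I → Q))) (m : Set Q → Q) :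
    ∃ f : Lex (I → Q), ∀ i, f i = m {q | ∃ g ∈ S, (∀ j < i, g j = f j) ∧ g i = q} := by
  refine ⟨toLex ((wellFounded_lt (α := I)).fix
    fun i F => m {q | ∃ g ∈ S, (∀ j, ∀ hj : j < i, g j = F j hj) ∧ g i = q}), fun i => ?_⟩
  exact (wellFounded_lt (α := I)).fix_eq _ i

theorem lex_glbs (hQ : GLBs Q) : GLBs (Lex (I → Q)) := by
  intro S
  choose m hm using hQ
  obtain ⟨f, hf⟩ := lex_rec S m
  refine ⟨f, lex_isGLB fun i => ?_⟩
  have := hm {q | ∃ g ∈ S, (∀ j < i, g j = f j) ∧ g i = q}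
  rwa [← hf i] at this

end lex

theorem GLBs.dual {α : Type u} [Preorder α] (h : GLBs α) : GLBs αᵒᵈ := by
  intro s
  obtain ⟨a, ha⟩ := h (upperBounds (OrderDual.toDual ⁻¹' s))
  exact ⟨OrderDual.toDual a, fun x hx => ha.2 fun b hb => hb hx, fun b hb => ha.1 hb⟩

theorem GLBs.withTop {α : Type u} [LinearOrder α]
    (h : ∀ s : Set α, s.Nonempty → ∃ a, IsGLB s a) : GLBs (WithTop α) := by
  intro s
  rcases (((↑) : α → WithTop α) ⁻¹' s).eq_empty_or_nonempty with h0 | h0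
  · refine ⟨⊤, fun x hx => ?_, fun b _ => le_top⟩
    induction x with
    | top => exact le_rfl
    | coe x => exact absurd (show x ∈ _ ⁻¹' s from hx) (h0 ▸ Set.notMem_empty x)
  · obtain ⟨a, ha⟩ := h _ h0
    refine ⟨a, fun x hx => ?_, fun b hb => ?_⟩
    · induction x with
      | top => exact le_top
      | coe x => exact WithTop.coe_le_coe.2 (ha.1 hx)
    · induction b with
      | top => obtain ⟨x, hx⟩ := h0; exact absurd (hb hx) (by simp)
      | coe b => exact WithTop.coe_le_coe.2 (ha.2 fun x hx => WithTop.coe_le_coe.1 (hb hx))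

theorem LU_coe {α : Type u} [LinearOrder α] {x : α} : LU (x : WithTop α) ↔ LU x := by
  constructor
  · intro h t ht htx
    obtain ⟨y, hy, hyt⟩ := h ((↑) '' t) (ht.image _)
      (by rintro _ ⟨z, hz, rfl⟩; exact WithTop.coe_lt_coe.2 (htx z hz))
    lift y to α using (hy.trans_le le_top).ne
    exact ⟨y, WithTop.coe_lt_coe.1 hy, fun z hz => WithTop.coe_lt_coe.1 (hyt _ ⟨z, hz, rfl⟩)⟩
  · intro h t ht htx
    obtain ⟨y, hy, hyt⟩ := h (((↑) : α → WithTop α) ⁻¹' t) (ht.preimage WithTop.coe_injective)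
      fun z hz => WithTop.coe_lt_coe.1 (htx _ hz)
    refine ⟨y, WithTop.coe_lt_coe.2 hy, fun z hz => ?_⟩
    lift z to α using ((htx z hz).trans_le le_top).ne
    exact WithTop.coe_lt_coe.2 (hyt z hz)

theorem not_RU_withTop {α : Type u} [LinearOrder α] [NoMaxOrder α] (h : ∀ x : α, ¬ RU x)
    (x : WithTop α) : ¬ RU x := by
  intro hx
  induction x with
  | top =>
    obtain ⟨y, hy, -⟩ := hx ∅ countable_empty (by simp)
    exact not_top_lt hy
  | coe x =>
    refine h x fun t ht htx => ?_
    obtain ⟨x', hx'⟩ := exists_gt x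
    obtain ⟨y, hy, hyt⟩ := hx ((↑) '' insert x' t) ((ht.insert _).image _) (by
      rintro _ ⟨z, (rfl | hz), rfl⟩
      · exact WithTop.coe_lt_coe.2 hx'
      · exact WithTop.coe_lt_coe.2 (htx z hz))
    lift y to α using ((hyt _ ⟨x', .inl rfl, rfl⟩).trans_le le_top).ne
    exact ⟨y, WithTop.coe_lt_coe.1 hy,
      fun z hz => WithTop.coe_lt_coe.1 (hyt _ ⟨z, .inr hz, rfl⟩)⟩

theorem exists_coe_between {α : Type u} [LinearOrder α] [NoMaxOrder α] {a b : WithTop α}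
    (h : a < b) : ∃ a' b' : α, a' < b' ∧ a = a' ∧ (b' : WithTop α) ≤ b := by
  lift a to α using (h.trans_le le_top).ne
  induction b with
  | top => obtain ⟨b, hb⟩ := exists_gt a; exact ⟨a, b, hb, rfl, le_top⟩
  | coe b => exact ⟨a, b, WithTop.coe_lt_coe.1 h, rfl, le_rfl⟩

theorem Cel.withTop {O α : Type u} [LinearOrder α] [NoMaxOrder α] (h : Cel O α) :
    Cel O (WithTop α) := by
  intro a b hab
  obtain ⟨a, b', hab', rfl, hb⟩ := exists_coe_between hab
  obtain ⟨f, g, h1, h2⟩ := h a b' hab'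
  refine ⟨fun i => f i, fun i => g i, fun i => ⟨?_, ?_, ?_⟩, fun i j hij => ?_⟩
  · exact WithTop.coe_le_coe.2 (h1 i).1
  · exact WithTop.coe_lt_coe.2 (h1 i).2.1
  · exact (WithTop.coe_le_coe.2 (h1 i).2.2).trans hb
  · exact (h2 i j hij).imp WithTop.coe_le_coe.2 WithTop.coe_le_coe.2

/-! ### Sequences in a well-order -/

section seq

variable {O : Type u} [LinearOrder O] [WellFoundedLT O] [OrderBot O] [SuccOrder O] [NoMaxOrder O]

/-- The sequence that continues `a 0, …, a n` by `w, ⊥, ⊥, …`. -/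
def pt (a : ℕ → O) (n : ℕ) (w : O) : Lex (ℕ → O) :=
  toLex fun j => if j ≤ n then a j else if j = n + 1 then w else ⊥

theorem pt_le (a : ℕ → O) {n : ℕ} (w : O) {j : ℕ} (h : j ≤ n) : pt a n w j = a j := if_pos h

theorem pt_succ (a : ℕ → O) (n : ℕ) (w : O) : pt a n w (n + 1) = w := by
  simp [pt]

theorem pt_gt (a : ℕ → O) {n : ℕ} (w : O) {j : ℕ} (h : n + 1 < j) : pt a n w j = ⊥ := by
  simp [pt, show ¬ j ≤ n by omega, show j ≠ n + 1 by omega]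

theorem pt_lt {a b : Lex (ℕ → O)} {n : ℕ} (h : ∀ j < n, a j = b j) (hn : a n < b n) (w : O) :
    pt a n w < b :=
  lex_lt.2 ⟨n, fun j hj => (pt_le _ _ hj.le).trans (h j hj), (pt_le a w le_rfl).trans_lt hn⟩

theorem lt_pt {a : Lex (ℕ → O)} {n : ℕ} {w : O} (h : a (n + 1) < w) : a < pt a n w :=
  lex_lt.2 ⟨n + 1, fun j hj => (pt_le _ _ (by omega)).symm, h.trans_eq (pt_succ _ _ _).symm⟩

theorem pt_lt_pt {a : ℕ → O} {n : ℕ} {w w' : O} (h : w < w') : pt a n w < pt a n w' :=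
  lex_lt.2 ⟨n + 1, fun j hj => (pt_le _ _ (by omega)).trans (pt_le _ _ (by omega)).symm, by
    rwa [pt_succ, pt_succ]⟩

/-- Right characters are countable: the elements exceeding `x` for the first time at a late
coordinate are coinitial above `x`. -/
theorem not_RU_seq (x : Lex (ℕ → O)) : ¬ RU x := by
  intro h
  obtain ⟨y, hy, hyt⟩ := h (range fun n => pt x n (Order.succ (x (n + 1))))
    (countable_range _) (by rintro _ ⟨n, rfl⟩; exact lt_pt (Order.lt_succ _))
  obtain ⟨n, h1, h2⟩ := lex_lt.1 hy
  exact (pt_lt h1 h2 _).not_gt (hyt _ ⟨n, rfl⟩)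

instance : @NoMaxOrder (Lex (ℕ → O)) Preorder.toLT :=
  ⟨fun x => ⟨pt x 0 (Order.succ (x 1)), lt_pt (Order.lt_succ _)⟩⟩

/-- The left character at a point `a 0, …, a n, w + 1, ⊥, ⊥, …` is the cofinality of `O`, by way of
the points `a 0, …, a n, w, u, ⊥, …`. -/
theorem exists_LU_seq (hO : ∀ t : Set O, t.Countable → ∃ y, ∀ z ∈ t, z < y)
    (a : ℕ → O) (n : ℕ) (w : O) : LU (pt a n (Order.succ w)) := by
  intro t ht htx
  obtain ⟨u, hu⟩ := hO ((fun z : Lex (ℕ → O) => z (n + 2)) '' t) (ht.image _)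
  have hy0 : ∀ j ≤ n, pt (pt a n w) (n + 1) u j = a j := fun j hj =>
    (pt_le _ _ (by omega)).trans (pt_le _ _ hj)
  have hy1 : pt (pt a n w) (n + 1) u (n + 1) = w := (pt_le _ _ le_rfl).trans (pt_succ _ _ _)
  refine ⟨pt (pt a n w) (n + 1) u, lex_lt.2 ⟨n + 1, fun j hj => ?_, ?_⟩, fun z hz => ?_⟩
  · rw [hy0 j (by omega), pt_le _ _ (by omega)]
  · rw [hy1, pt_succ]; exact Order.lt_succ _
  · obtain ⟨i, h1, h2⟩ := lex_lt.1 (htx z hz)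
    rcases lt_trichotomy i (n + 1) with hi | rfl | hi
    · refine lex_lt.2 ⟨i, fun j hj => ?_, ?_⟩
      · rw [h1 j hj, hy0 j (by omega), pt_le _ _ (by omega)]
      · rwa [hy0 i (by omega), ← pt_le a (Order.succ w) (show i ≤ n by omega)]
    · have h1' : ∀ j < n + 1, z j = pt (pt a n w) (n + 1) u j := fun j hj => by
        rw [h1 j hj, hy0 j (by omega), pt_le _ _ (by omega)]
      rw [pt_succ, Order.lt_succ_iff] at h2
      rcases h2.lt_or_eq with h3 | h3
      · exact lex_lt.2 ⟨n + 1, h1', by rwa [hy1]⟩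
      · refine lex_lt.2 ⟨n + 2, fun j hj => ?_, ?_⟩
        · rcases (show j < n + 1 ∨ j = n + 1 by omega) with hj | rfl
          · exact h1' j hj
          · rw [hy1, h3]
        · exact (hu _ ⟨z, hz, rfl⟩).trans_eq (pt_succ _ (n + 1) u).symm
    · rw [pt_gt _ _ hi] at h2
      exact absurd h2 not_lt_bot

/-- The left character at a point `a 0, …, a n, v, ⊥, ⊥, …` is the cofinality of `v`. -/
theorem not_LU_seq {v : O} (hv : ⊥ < v) {t : Set O} (ht : t.Countable) (htv : ∀ z ∈ t, z < v)
    (hcof : ∀ w < v, ∃ z ∈ t, w < z) (a : ℕ → O) (n : ℕ) : ¬ LU (pt a n v) := by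
  intro h
  obtain ⟨y, hy, hyt⟩ := h (pt a n '' t) (ht.image _)
    (by rintro _ ⟨z, hz, rfl⟩; exact pt_lt_pt (htv z hz))
  obtain ⟨i, h1, h2⟩ := lex_lt.1 hy
  have key : ∃ z ∈ t, y < pt a n z := by
    rcases lt_trichotomy i (n + 1) with hi | rfl | hi
    · obtain ⟨z, hz, -⟩ := hcof ⊥ hv
      refine ⟨z, hz, lex_lt.2 ⟨i, fun j hj => ?_, ?_⟩⟩
      · rw [h1 j hj, pt_le _ _ (by omega), pt_le _ _ (by omega)]
      · rw [pt_le _ _ (by omega)] at h2 ⊢; exact h2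
    · rw [pt_succ] at h2
      obtain ⟨z, hz, hz'⟩ := hcof _ h2
      refine ⟨z, hz, lex_lt.2 ⟨n + 1, fun j hj => ?_, ?_⟩⟩
      · rw [h1 j hj, pt_le _ _ (by omega), pt_le _ _ (by omega)]
      · rwa [pt_succ]
    · rw [pt_gt _ _ hi] at h2
      exact absurd h2 not_lt_bot
  obtain ⟨z, hz, hz'⟩ := key
  exact hz'.not_gt (hyt _ ⟨z, hz, rfl⟩)

theorem exists_LU_between (hO : ∀ t : Set O, t.Countable → ∃ y, ∀ z ∈ t, z < y)
    {a b : Lex (ℕ → O)} (h : a < b) : ∃ c, a < c ∧ c < b ∧ LU c := by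
  obtain ⟨n, h1, h2⟩ := lex_lt.1 h
  exact ⟨_, lt_pt (Order.lt_succ _), pt_lt h1 h2 _, exists_LU_seq hO a n (a (n + 1))⟩

instance : @DenselyOrdered (Lex (ℕ → O)) Preorder.toLT := by
  refine ⟨fun a b h => ?_⟩
  obtain ⟨n, h1, h2⟩ := lex_lt.1 h
  exact ⟨_, lt_pt (Order.lt_succ _), pt_lt h1 h2 _⟩

theorem seq_glb {S : Set (Lex (ℕ → O))} (hS : S.Nonempty) : ∃ f, IsGLB S f := by
  classical
  obtain ⟨f, hf⟩ := lex_rec S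
    fun s => if h : s.Nonempty then (wellFounded_lt (α := O)).min s h else ⊥
  have hne : ∀ i, {q | ∃ g ∈ S, (∀ j < i, g j = f j) ∧ g i = q}.Nonempty := by
    intro i
    induction i with
    | zero => obtain ⟨g, hg⟩ := hS; exact ⟨g 0, g, hg, by simp, rfl⟩
    | succ i ih =>
      have h1 := hf i
      rw [dif_pos ih] at h1
      obtain ⟨g, hg, hgj, hgi⟩ := (wellFounded_lt (α := O)).min_mem _ ih
      refine ⟨g (i + 1), g, hg, fun j hj => ?_, rfl⟩
      rcases (show j < i ∨ j = i by omega) with hj | rfl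
      · exact hgj j hj
      · rw [hgi, h1]
  refine ⟨f, lex_isGLB fun i => ?_⟩
  have h1 := hf i
  rw [dif_pos (hne i)] at h1
  rw [h1]
  refine IsLeast.isGLB ⟨(wellFounded_lt (α := O)).min_mem _ _, fun q hq => ?_⟩
  exact WellFounded.min_le (wellFounded_lt (α := O)) hq

theorem seq_cel : Cel O (Lex (ℕ → O)) := by
  intro a b h
  obtain ⟨n, h1, h2⟩ := lex_lt.1 h
  let c : ℕ → O := pt a n (Order.succ (a (n + 1)))
  have hc : ∀ j ≤ n, c j = a j := fun j hj => pt_le _ _ hj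
  have hc' : c (n + 1) = Order.succ (a (n + 1)) := pt_succ _ _ _
  have hf : ∀ ξ, a ≤ pt c (n + 1) ξ := fun ξ => by
    refine (lex_lt.2 ⟨n + 1, fun j hj => ?_, ?_⟩).le
    · exact ((pt_le c ξ (by omega)).trans (hc j (by omega))).symm
    · exact (Order.lt_succ _).trans_eq ((pt_le c ξ le_rfl).trans hc').symm
  have hg : ∀ ξ, pt c (n + 1) ξ ≤ b := fun ξ => by
    refine (lex_lt.2 ⟨n, fun j hj => ?_, ?_⟩).le
    · exact ((pt_le c ξ (by omega)).trans (hc j hj.le)).trans (h1 j hj)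
    · exact ((pt_le c ξ (by omega)).trans (hc n le_rfl)).trans_lt h2
  have hm : ∀ i j : O, i < j → pt c (n + 1) (Order.succ i) ≤ pt c (n + 1) j := fun i j hij => by
    rcases (Order.succ_le_of_lt hij).lt_or_eq with h | h
    · exact (pt_lt_pt h).le
    · rw [h]
  exact ⟨fun ξ => pt c (n + 1) ξ, fun ξ => pt c (n + 1) (Order.succ ξ),
    fun ξ => ⟨hf ξ, pt_lt_pt (Order.lt_succ ξ), hg _⟩,
    fun i j hij => (lt_or_gt_of_ne hij).imp (hm i j) (hm j i)⟩

/-- Some element of `O` is a limit of countable cofinality. -/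
theorem exists_limit (hO : ∀ t : Set O, t.Countable → ∃ y, ∀ z ∈ t, z < y) :
    ∃ v : O, ⊥ < v ∧ ∃ t : Set O, t.Countable ∧ (∀ z ∈ t, z < v) ∧ ∀ w < v, ∃ z ∈ t, w < z := by
  let t : Set O := range fun n : ℕ => Order.succ^[n] ⊥
  have ht : t.Countable := countable_range _
  have hsucc : ∀ z ∈ t, Order.succ z ∈ t := by
    rintro _ ⟨n, rfl⟩
    exact ⟨n + 1, Function.iterate_succ_apply' _ _ _⟩
  have hne := hO t ht
  let v := (wellFounded_lt (α := O)).min {y | ∀ z ∈ t, z < y} hne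
  have hv : ∀ z ∈ t, z < v := (wellFounded_lt (α := O)).min_mem {y | ∀ z ∈ t, z < y} hne
  refine ⟨v, hv _ ⟨0, rfl⟩, t, ht, hv, fun w hw => ?_⟩
  by_contra! hcon
  have : v ≤ w := WellFounded.min_le (wellFounded_lt (α := O))
    (show w ∈ {y | ∀ z ∈ t, z < y} from fun z hz =>
      (Order.lt_succ z).trans_le (hcon _ (hsucc z hz)))
  exact this.not_gt hw

end seq

/-! ### The rigid orders indexed by sets -/

section rigid

variable {O : Type u} [LinearOrder O] [WellFoundedLT O] [OrderBot O] [SuccOrder O] [NoMaxOrder O]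

theorem zero_mono {x y : Lex (ℕ → O)} (h : x ≤ y) : x 0 ≤ y 0 := by
  by_contra hlt
  exact h.not_gt (lex_lt.2 ⟨0, by simp, not_le.1 hlt⟩)

open Classical in
/-- A point with first entry `ξ`, whose left character codes whether `ξ ∈ A`. -/
noncomputable def pA (v : O) (A : Set O) (ξ : O) : Lex (ℕ → O) :=
  pt (fun _ => ξ) 0 (if ξ ∈ A then Order.succ ⊥ else v)

/-- The set of all points `pA v A ξ`. -/
def PA (v : O) (A : Set O) : Set (WithTop (Lex (ℕ → O))) := range fun ξ => ↑(pA v A ξ)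

/-- Sequences in `O` with a greatest element, and with each point of `PA v A` replaced by a
copy of the reverse order. -/
abbrev YA (v : O) (A : Set O) : Type u := Ins (PA v A) (WithTop (Lex (ℕ → O)))ᵒᵈ

/-- The first point of the copy inserted at `pA v A ξ`. -/
noncomputable def eA (v : O) (A : Set O) (ξ : O) : YA v A := Ins.base _ _ ↑(pA v A ξ)

theorem pA_zero (v : O) (A : Set O) (ξ : O) : pA v A ξ 0 = ξ := pt_le _ _ le_rfl

theorem pA_strictMono (v : O) (A : Set O) : StrictMono (pA v A) := fun ξ η h =>
  lex_lt.2 ⟨0, by simp, by rwa [pA_zero, pA_zero]⟩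

theorem eA_strictMono (v : O) (A : Set O) : StrictMono (eA v A) := fun _ _ h =>
  Ins.base_strictMono (WithTop.coe_lt_coe.2 (pA_strictMono v A h))

variable (O) in
/-- The hypothesis that no countable subset of `O` is cofinal. -/
def Unc : Prop := ∀ t : Set O, t.Countable → ∃ y, ∀ z ∈ t, z < y

/-- `v` is a limit of countable cofinality. -/
def Lim (v : O) : Prop :=
  ⊥ < v ∧ ∃ t : Set O, t.Countable ∧ (∀ z ∈ t, z < v) ∧ ∀ w < v, ∃ z ∈ t, w < z

variable {v : O} {A B : Set O}

theorem LU_eA (hO : Unc O) (hv : Lim v) {ξ : O} : LU (eA v A ξ) ↔ ξ ∈ A := by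
  rw [eA, Ins.LU_base, LU_coe, pA]
  obtain ⟨h0, t, ht, htv, hcof⟩ := hv
  split_ifs with h
  · exact ⟨fun _ => h, fun _ => exists_LU_seq hO _ _ _⟩
  · exact ⟨fun h' => absurd h' (not_LU_seq h0 ht htv hcof _ _), fun h' => absurd h' h⟩

theorem not_LU_dual (h : (WithTop (Lex (ℕ → O)))ᵒᵈ) : ¬ LU h := fun hL =>
  not_RU_withTop not_RU_seq (OrderDual.ofDual h) hL

theorem exists_LU_withTop (hO : Unc O) {a b : WithTop (Lex (ℕ → O))} (h : a < b) :
    ∃ c, a < c ∧ c < b ∧ LU c := by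
  obtain ⟨a, b', hab, rfl, hb⟩ := exists_coe_between h
  obtain ⟨c, h1, h2, h3⟩ := exists_LU_between hO hab
  exact ⟨c, WithTop.coe_lt_coe.2 h1, (WithTop.coe_lt_coe.2 h2).trans_le hb, LU_coe.2 h3⟩

theorem exists_RU_dual (hO : Unc O) {a b : (WithTop (Lex (ℕ → O)))ᵒᵈ} (h : a < b) :
    ∃ c, a < c ∧ c < b ∧ RU c := by
  obtain ⟨c, h1, h2, h3⟩ :=
    exists_LU_withTop hO (show OrderDual.ofDual b < OrderDual.ofDual a from h)
  exact ⟨OrderDual.toDual c, h2, h1, h3.dual⟩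

/-- The neighbourhoods are the sequences with first entry `ξ` below `pA v A ξ`, which contain no
point of `PA v A`, and the inserted copy of the reverse order. -/
theorem junc_eA (hv : Lim v) (ξ : O) : Junc (eA v A ξ) := by
  have hP : (pA v A ξ : WithTop (Lex (ℕ → O))) ∈ PA v A := ⟨ξ, rfl⟩
  refine ⟨⟨Ins.base _ _ ↑(pt (fun _ => ξ) 0 ⊥), ?_, fun y hay hye hR => ?_⟩,
    Ins.fib hP (OrderDual.toDual ((toLex fun _ => ⊥ : Lex (ℕ → O)) : WithTop _)), ?_,
    fun y hey hyb hL => ?_⟩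
  · refine Ins.base_strictMono (WithTop.coe_lt_coe.2 (pt_lt_pt ?_))
    split_ifs
    · exact Order.lt_succ _
    · exact hv.1
  · have hlt : y.fst < ↑(pA v A ξ) := by
      rcases Ins.lt_iff.1 hye with h | h
      · exact h
      · exact absurd h.2 not_lt_bot
    have hle := Ins.fst_mono hay.le
    obtain ⟨c, hc⟩ := WithTop.ne_top_iff_exists.1 (hlt.trans_le le_top).ne
    rw [← hc] at hlt hle
    have h1 := zero_mono (WithTop.coe_lt_coe.1 hlt).le
    have h2 := zero_mono (WithTop.coe_le_coe.1 hle)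
    rw [pA_zero] at h1
    have h3 : c 0 = ξ := le_antisymm h1 ((pt_le (fun _ => ξ) ⊥ le_rfl).ge.trans h2)
    have hcP : y.fst ∉ PA v A := by
      rintro ⟨η, hη⟩
      have hη' : pA v A η = c := WithTop.coe_injective (hη.trans hc.symm)
      rw [← hη', pA_zero] at h3
      rw [← hη', h3] at hlt
      exact lt_irrefl _ hlt
    have hy : y = Ins.base _ _ y.fst := Ins.ext' rfl (y.prop.resolve_left hcP)
    rw [hy] at hR
    exact Ins.not_RU_base hcP (not_RU_withTop not_RU_seq _) hR
  · exact Ins.lt_iff.2 (.inr ⟨rfl, WithTop.coe_lt_top _⟩)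
  · have hyf : y.fst = ↑(pA v A ξ) := le_antisymm (Ins.fst_mono hyb.le) (Ins.fst_mono hey.le)
    have hy0 : ⊥ < y.snd := by
      rcases Ins.lt_iff.1 hey with h | h
      · exact absurd hyf.symm h.ne
      · exact h.2
    rw [Ins.eq_fib hP hyf] at hL
    exact not_LU_dual _ (Ins.LU_fib hP hy0 hL)

/-- At any other point, one side contains a piece of the original order or of the reverse order that
is excluded for junctions. -/
theorem Junc.exists_eA (hO : Unc O) {x : YA v A} (hx : Junc x) : ∃ ξ, x = eA v A ξ := by
  obtain ⟨⟨a, ha, h1⟩, b, hb, h2⟩ := hx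
  have hfst : b.fst = x.fst := by
    by_contra hne
    obtain ⟨c, hc1, hc2, hc3⟩ :=
      exists_LU_withTop hO ((Ins.fst_mono hb.le).lt_of_ne (Ne.symm hne))
    exact h2 (Ins.base _ _ c) (Ins.lt_iff.2 (.inl hc1)) (Ins.lt_iff.2 (.inl hc2))
      (Ins.LU_base.2 hc3)
  have hP : x.fst ∈ PA v A := hfst ▸ Ins.mem_of_fst_eq hb hfst.symm
  have hsnd : x.snd = ⊥ := by
    by_contra hne
    have hm : ∃ m < x.snd, ∀ h, m < h → a < Ins.fib hP h := by
      rcases Ins.lt_iff.1 ha with h | h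
      · exact ⟨⊥, bot_lt_iff_ne_bot.2 hne, fun k hk => Ins.lt_iff.2 (.inl h)⟩
      · exact ⟨a.snd, h.2, fun k hk => Ins.lt_iff.2 (.inr ⟨h.1, hk⟩)⟩
    obtain ⟨m, hm1, hm2⟩ := hm
    obtain ⟨h, hh1, hh2, hh3⟩ := exists_RU_dual hO hm1
    exact h1 _ (hm2 h hh1) (Ins.lt_iff.2 (.inr ⟨rfl, hh2⟩)) (Ins.RU_fib hP hh2 hh3)
  obtain ⟨ξ, hξ⟩ := hP
  exact ⟨ξ, Ins.ext' hξ.symm hsnd⟩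

/-- Isomorphisms preserve the junctions, which are well-ordered, so they fix their indices. -/
theorem eq_of_iso (hO : Unc O) (hv : Lim v) (φ : YA v A ≃o YA v B) : A = B := by
  choose σ hσ using fun ξ => ((junc_eA (A := A) hv ξ).map φ).exists_eA hO
  choose τ hτ using fun ξ => ((junc_eA (A := B) hv ξ).map φ.symm).exists_eA hO
  have hσm : StrictMono σ := fun ξ η h => by
    rw [← (eA_strictMono v B).lt_iff_lt, ← hσ, ← hσ, φ.lt_iff_lt]
    exact eA_strictMono v A h
  have hτm : StrictMono τ := fun ξ η h => by
    rw [← (eA_strictMono v A).lt_iff_lt, ← hτ, ← hτ, φ.symm.lt_iff_lt]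
    exact eA_strictMono v B h
  have hτσ : ∀ ξ, τ (σ ξ) = ξ := fun ξ => by
    apply (eA_strictMono v A).injective
    rw [← hτ, ← hσ, φ.symm_apply_apply]
  have hid : ∀ ξ, σ ξ = ξ := fun ξ =>
    le_antisymm ((hτm.le_apply (x := σ ξ)).trans_eq (hτσ ξ)) hσm.le_apply
  ext ξ
  rw [← LU_eA (A := A) hO hv, ← LU_map φ, hσ, hid, LU_eA hO hv]

/-- An isomorphism onto the reverse order would induce, on the indices of the junctions, a strictly
antitone self-map of `O`. -/
theorem no_anti_iso (hO : Unc O) (hv : Lim v) (φ : YA v A ≃o (YA v B)ᵒᵈ) : False := by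
  choose σ hσ using fun ξ =>
    (show Junc (OrderDual.ofDual (φ (eA v A ξ))) from
      ((junc_eA (A := A) hv ξ).map φ).dual).exists_eA hO
  have hσm : StrictAnti σ := fun ξ η h => by
    rw [← (eA_strictMono v B).lt_iff_lt, ← hσ, ← hσ, OrderDual.ofDual_lt_ofDual, φ.lt_iff_lt]
    exact eA_strictMono v A h
  obtain ⟨_, ⟨ξ, rfl⟩, hξ⟩ := (wellFounded_lt (α := O)).has_min (range σ) ⟨_, ⊥, rfl⟩
  exact hξ _ ⟨_, rfl⟩ (hσm (Order.lt_succ ξ))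

theorem withTop_glbs : GLBs (WithTop (Lex (ℕ → O))) := GLBs.withTop fun _ h => seq_glb h

theorem YA_glbs : GLBs (YA v A) := Ins.glbs withTop_glbs withTop_glbs.dual

theorem YA_cel : Cel O (YA v A) := Cel.ins_of_base seq_cel.withTop seq_cel.withTop.dual

theorem YA_card {κ : Cardinal.{u}} (hκ : κ ^ (ℵ₀ : Cardinal.{u}) = κ) (h0 : ℵ₀ ≤ κ)
    (hO : #O = κ) : #(YA v A) ≤ κ := by
  have h1 : #(Lex (ℕ → O)) = κ := by
    rw [← hκ, ← hO]
    simp [Lex]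
  have h2 : #(WithTop (Lex (ℕ → O))) ≤ κ := by
    change #(Option _) ≤ κ
    rw [mk_option, h1]
    exact (add_one_eq h0).le
  exact Ins.card_le.trans ((mul_le_mul' h2 h2).trans (mul_eq_self h0).le)

end rigid

/-! ### The common base -/

section base

variable {I Q : Type u} [LinearOrder I] [WellFoundedLT I] [LinearOrder Q]

variable (I Q) in
/-- The eventually constant elements, with last value `⊥`, of a lexicographic power. -/
def evBot [OrderBot Q] : Set (Lex (I → Q)) := {f | ∃ i, ∀ j, i < j → f j = ⊥}

/-- The element that continues the restriction of `a` to `Iio i` by `c`, and then by `e`. -/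
def glue (a : I → Q) (i : I) (c : Q) (e : I → Q) : Lex (I → Q) :=
  toLex fun j => if j < i then a j else if j = i then c else e j

theorem glue_lt (a : I → Q) {i : I} (c : Q) (e : I → Q) {j : I} (h : j < i) :
    glue a i c e j = a j := if_pos h

theorem glue_self (a : I → Q) (i : I) (c : Q) (e : I → Q) : glue a i c e i = c := by
  simp [glue]

theorem glue_gt (a : I → Q) {i : I} (c : Q) (e : I → Q) {j : I} (h : i < j) :
    glue a i c e j = e j := by
  simp [glue, h.not_gt, h.ne']

theorem exists_glue [DenselyOrdered Q] {a b : Lex (I → Q)} (h : a < b) :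
    ∃ i c, ∀ e, a < glue a i c e ∧ glue a i c e < b := by
  obtain ⟨i, h1, h2⟩ := lex_lt.1 h
  obtain ⟨c, hc, hc'⟩ := exists_between h2
  refine ⟨i, c, fun e => ⟨lex_lt.2 ⟨i, fun j hj => (glue_lt _ _ _ hj).symm, ?_⟩,
    lex_lt.2 ⟨i, fun j hj => (glue_lt _ _ _ hj).trans (h1 j hj), ?_⟩⟩⟩
  · exact hc.trans_eq (glue_self _ _ _ _).symm
  · exact (glue_self _ _ _ _).trans_lt hc'

instance [DenselyOrdered Q] : @DenselyOrdered (Lex (I → Q)) Preorder.toLT :=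
  ⟨fun a b h => by
    obtain ⟨i, c, hc⟩ := exists_glue h
    exact ⟨_, hc a⟩⟩

theorem evBot_dense [OrderBot Q] [DenselyOrdered Q] (a b : Lex (I → Q)) (h : a < b) :
    ∃ d ∈ evBot I Q, a < d ∧ d < b := by
  obtain ⟨i, c, hc⟩ := exists_glue h
  exact ⟨_, ⟨i, fun j hj => glue_gt a c (fun _ => ⊥) hj⟩, hc _⟩

/-- An eventually least element is determined by its restriction to some `Iic i`. -/
theorem evBot_card [OrderBot Q] {κ : Cardinal.{u}} (h0 : ℵ₀ ≤ κ) (hI : #I ≤ κ)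
    (hQ : ∀ i : I, #Q ^ #(Iic i) ≤ κ) : #(evBot I Q) ≤ κ := by
  classical
  have h1 : #(evBot I Q) ≤ #(Σ i : I, Iic i → Q) := by
    refine mk_le_of_surjective (f := fun p => ⟨toLex fun j =>
      if h : j ≤ p.1 then p.2 ⟨j, h⟩ else ⊥, p.1, fun j hj => dif_neg hj.not_ge⟩) ?_
    rintro ⟨f, i, hi⟩
    refine ⟨⟨i, fun j => f j⟩, Subtype.ext ?_⟩
    funext j
    change (if h : j ≤ i then f j else ⊥) = f j
    split_ifs with h
    · rfl
    · exact (hi j (not_le.1 h)).symm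
  refine h1.trans ?_
  rw [mk_sigma]
  have h2 : Cardinal.sum (fun i : I => #(Iic i → Q)) ≤ Cardinal.sum (fun _ : I => κ) :=
    sum_le_sum _ _ fun i => by simpa using hQ i
  refine h2.trans ?_
  rw [sum_const']
  exact (mul_le_mul' hI le_rfl).trans (mul_eq_self h0).le

/-- Past some coordinate, the elements of an interval can be continued arbitrarily. -/
theorem lt_mk_Ioo [DenselyOrdered Q] {κ : Cardinal.{u}} (hQ : ∀ i : I, κ < #Q ^ #(Ioi i))
    (a b : Lex (I → Q)) (h : a < b) : κ < #(Ioo a b) := by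
  classical
  obtain ⟨i, c, hc⟩ := exists_glue h
  have h1 : #(Ioi i → Q) = #Q ^ #(Ioi i) := by simp
  refine (h1 ▸ hQ i).trans_le ?_
  refine mk_le_of_injective (f := fun q => ⟨glue a i c
    fun j => if h : i < j then q ⟨j, h⟩ else c, hc _⟩) fun q q' hqq => ?_
  funext ⟨j, hj⟩
  have h2 := congrFun (Subtype.ext_iff.1 hqq) j
  have h3 : ∀ q : Ioi i → Q, glue a i c (fun j => if h : i < j then q ⟨j, h⟩ else c) j
      = q ⟨j, hj⟩ := fun q => (glue_gt _ _ _ hj).trans (dif_pos hj)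
  exact (h3 q).symm.trans (h2.trans (h3 q'))

end base

/-! ### Recovering the fibres -/

section fibres

variable {C H H' : Type u} [LinearOrder C] [LinearOrder H] [OrderBot H] [LinearOrder H']
  [OrderBot H'] {S : Set C} {κ : Cardinal.{u}}

/-- The classes of points at small distance are the fibres. -/
theorem cls_eq (hH : #H ≤ κ) (hI : ∀ a b : C, a < b → κ < #(Ioo a b)) (x : Ins S H) :
    cls κ x = {y | y.fst = x.fst} := by
  have hlt : ∀ x y : Ins S H, x.fst < y.fst → κ < #(uIcc x y) := fun x y h => by
    refine (hI _ _ h).trans_le ?_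
    refine mk_le_of_injective (f := fun c => ⟨Ins.base S H c, ?_⟩) fun c d hcd => ?_
    · rw [mem_uIcc]
      exact .inl ⟨Ins.le_iff.2 (.inl c.2.1), Ins.le_iff.2 (.inl c.2.2)⟩
    · exact Subtype.ext (congrArg Ins.fst (Subtype.ext_iff.1 hcd))
  ext y
  change #(uIcc x y) ≤ κ ↔ y.fst = x.fst
  constructor
  · intro h
    by_contra hne
    rcases lt_or_gt_of_ne hne with h1 | h1
    · exact (hlt y x h1).not_ge (uIcc_comm x y ▸ h)
    · exact (hlt x y h1).not_ge h
  · intro h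
    have hmem : ∀ z ∈ uIcc x y, z.fst = x.fst := by
      intro z hz
      rcases mem_uIcc.1 hz with hz | hz
      · exact le_antisymm ((Ins.fst_mono hz.2).trans_eq h) (Ins.fst_mono hz.1)
      · exact le_antisymm (Ins.fst_mono hz.2) (h.ge.trans (Ins.fst_mono hz.1))
    refine (mk_le_of_injective (f := fun z : uIcc x y => Ins.snd z.1) fun z w hzw => ?_).trans hH
    exact Subtype.ext (Ins.ext' ((hmem z z.2).trans (hmem w w.2).symm) hzw)

/-- A monotone or antitone injection with convex range maps some inserted copy of `H` onto an
inserted copy of `H'`, because these copies are the sets of points at small distance. -/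
theorem fibre_iso [Nontrivial C] [DenselyOrdered C] [Nontrivial H] (hH : #H ≤ κ) (hH' : #H' ≤ κ)
    (hI : ∀ a b : C, a < b → κ < #(Ioo a b)) (hS : ∀ a b : C, a < b → ∃ d ∈ S, a < d ∧ d < b)
    {f : Ins S H → Ins S H'} (hf : StrictMono f ∨ StrictAnti f) (hr : (range f).OrdConnected) :
    Nonempty (H ≃o H') ∨ Nonempty (H ≃o H'ᵒᵈ) := by
  obtain ⟨k1, k2, hk⟩ := exists_pair_lt C
  obtain ⟨d, hd, h1, h2⟩ := hS _ _ hk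
  have hinj : Function.Injective f := hf.elim StrictMono.injective StrictAnti.injective
  have himg := image_cls (κ := κ) hf hr (a := Ins.base S H k1) (x := Ins.fib hd ⊥)
    (b := Ins.base S H k2) (Ins.lt_iff.2 (.inl h1)) (Ins.lt_iff.2 (.inl h2))
    (by rw [cls_eq hH hI]; exact h1.ne) (by rw [cls_eq hH hI]; exact h2.ne')
  rw [cls_eq hH hI, cls_eq hH' hI] at himg
  set c := (f (Ins.fib hd ⊥)).fst
  have hfst : ∀ h : H, (f (Ins.fib hd h)).fst = c := fun h => by
    have : f (Ins.fib hd h) ∈ {y : Ins S H' | y.fst = c} := himg ▸ ⟨Ins.fib hd h, rfl, rfl⟩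
    exact this
  let g : H → H' := fun h => (f (Ins.fib hd h)).snd
  have hc : c ∈ S := by
    obtain ⟨u, v, huv⟩ := exists_pair_ne H
    by_contra hc
    have hb : ∀ h, g h = ⊥ := fun h =>
      (f (Ins.fib hd h)).prop.resolve_left (by rw [hfst]; exact hc)
    refine huv (congrArg Ins.snd (hinj (Ins.ext' ?_ ?_) : Ins.fib hd u = Ins.fib hd v))
    · rw [hfst, hfst]
    · exact (hb u).trans (hb v).symm
  have hsurj : Function.Surjective g := by
    intro h'
    have : Ins.fib hc h' ∈ f '' {y : Ins S H | y.fst = d} := himg ▸ rfl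
    obtain ⟨y, hy, hy'⟩ := this
    refine ⟨y.snd, ?_⟩
    change (f (Ins.fib hd y.snd)).snd = h'
    rw [← Ins.eq_fib hd hy, hy', Ins.snd_fib]
  have hg : ∀ {u v}, f (Ins.fib hd u) < f (Ins.fib hd v) → g u < g v := fun {u v} h => by
    rcases Ins.lt_iff.1 h with h | h
    · rw [hfst, hfst] at h
      exact absurd h (lt_irrefl _)
    · exact h.2
  rcases hf with hf | hf
  · have hm : StrictMono g := fun u v huv => hg (hf ((Ins.fib_lt_fib hd).2 huv))
    exact .inl ⟨hm.orderIsoOfSurjective g hsurj⟩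
  · have hm : StrictMono (OrderDual.toDual ∘ g) := fun u v huv =>
      hg (hf ((Ins.fib_lt_fib hd).2 huv))
    exact .inr ⟨hm.orderIsoOfSurjective _ (OrderDual.toDual.surjective.comp hsurj)⟩

end fibres

/-! ### The family of continua -/

section family

variable {O K : Type u} [LinearOrder O] [WellFoundedLT O] [OrderBot O] [SuccOrder O] [NoMaxOrder O]
  [LinearOrder K] [DenselyOrdered K] [Nontrivial K] {v : O} {E : Set K} {κ : Cardinal.{u}}

/-- The points over `E` form a dense subset of `Ins E (YA v A)`. -/
theorem exists_fst_mem (hE : ∀ a b : K, a < b → ∃ d ∈ E, a < d ∧ d < b) (A : Set O)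
    (x y : Ins E (YA v A)) (h : x < y) :
    ∃ d ∈ {z : Ins E (YA v A) | z.fst ∈ E}, x < d ∧ d < y := by
  rcases Ins.lt_iff.1 h with h1 | h1
  · obtain ⟨d, hd, h2, h3⟩ := hE _ _ h1
    exact ⟨Ins.base _ _ d, hd, Ins.lt_iff.2 (.inl h2), Ins.lt_iff.2 (.inl h3)⟩
  · have hS := Ins.mem_of_fst_eq h h1.1
    obtain ⟨d, h2, h3⟩ := exists_between h1.2
    exact ⟨Ins.fib hS d, hS, Ins.lt_iff.2 (.inr ⟨h1.1, h2⟩), Ins.lt_iff.2 (.inr ⟨rfl, h3⟩)⟩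

theorem card_fst_mem (h0 : ℵ₀ ≤ κ) (hEκ : #E ≤ κ) (A : Set O) (hY : #(YA v A) ≤ κ) :
    #{z : Ins E (YA v A) | z.fst ∈ E} ≤ κ := by
  calc #{z : Ins E (YA v A) | z.fst ∈ E} ≤ #(E × YA v A) :=
        mk_le_of_injective
          (f := fun z : {z : Ins E (YA v A) | z.fst ∈ E} => ((⟨z.1.fst, z.2⟩ : E), z.1.snd))
          fun x y h => Subtype.ext (Ins.ext' (congrArg (fun p : E × YA v A => (p.1 : K)) h)
            (congrArg (fun p : E × YA v A => p.2) h))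
    _ = #E * #(YA v A) := by rw [mk_prod, lift_id, lift_id]
    _ ≤ κ * κ := mul_le_mul' hEκ hY
    _ = κ := mul_eq_self h0

/-- The continua `Ins E (YA v A)`, for `A` ranging over the subsets of `O`, are as required
whenever `K` is complete, `E` is a small dense subset of `K`, and all intervals of `K` are large. -/
theorem exists_family (hκ : κ ^ (ℵ₀ : Cardinal.{u}) = κ) (h0 : ℵ₀ ≤ κ) (hO : #O = κ)
    (hU : Unc O) (hK : GLBs K) (hE : ∀ a b : K, a < b → ∃ d ∈ E, a < d ∧ d < b) (hEκ : #E ≤ κ)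
    (hI : ∀ a b : K, a < b → κ < #(Ioo a b)) :
    ∃ (ι : Type u) (X : ι → TopCat.{u}), #ι = 2 ^ κ ∧ IncompFamily X ∧
      (∀ i, IsContinuum ↥(X i) ∧ IsLOTS ↥(X i) ∧
        hatWt ↥(X i) = κ ∧ wt ↥(X i) = κ ∧ #↥(X i) = #K) := by
  obtain ⟨v, hv⟩ : ∃ v : O, Lim v := exists_limit hU
  have hY : ∀ A : Set O, #(YA v A) ≤ κ := fun A => YA_card hκ h0 hO
  have hKκ : κ < #K := by
    obtain ⟨a, b, hab⟩ := exists_pair_lt K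
    exact (hI a b hab).trans_le (mk_subtype_le _)
  refine ⟨Set O, fun A => @TopCat.of (Ins E (YA v A)) (Preorder.topology _), by simp [hO], ?_, ?_⟩
  · intro A B hAB f hf
    let : TopologicalSpace (Ins E (YA v A)) := Preorder.topology _
    let : TopologicalSpace (Ins E (YA v B)) := Preorder.topology _
    have : OrderTopology (Ins E (YA v A)) := ⟨rfl⟩
    have : OrderTopology (Ins E (YA v B)) := ⟨rfl⟩
    obtain ⟨h1, h2⟩ := embedding_mono (α := Ins E (YA v A)) (β := Ins E (YA v B))
      (Ins.glbs hK YA_glbs) f hf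
    rcases fibre_iso (hY A) (hY B) hI hE h1 h2 with ⟨⟨φ⟩⟩ | ⟨⟨φ⟩⟩
    · exact hAB (eq_of_iso hU hv φ)
    · exact no_anti_iso hU hv φ
  · intro A
    let : TopologicalSpace (Ins E (YA v A)) := Preorder.topology _
    have : OrderTopology (Ins E (YA v A)) := ⟨rfl⟩
    have h1 := hatWt_eq (α := Ins E (YA v A)) h0 _ (card_fst_mem h0 hEκ A (hY A))
      (exists_fst_mem hE A) hO (Cel.ins_of_dense hE YA_cel)
    refine ⟨isContinuum_of_glbs (α := Ins E (YA v A)) (Ins.glbs hK YA_glbs),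
      ⟨(inferInstance : LinearOrder (Ins E (YA v A))), ⟨rfl⟩⟩, h1.1, h1.2, le_antisymm ?_ ?_⟩
    · refine Ins.card_le.trans ((mul_le_mul' le_rfl ((hY A).trans hKκ.le)).trans ?_)
      exact (mul_eq_self (h0.trans hKκ.le)).le
    · exact mk_le_of_injective (f := Ins.base E (YA v A)) Ins.base_strictMono.injective

end family

/-! ### Cardinal arithmetic -/

/-- By König's theorem, `κ ^ ℵ₀ = κ` implies that the initial ordinal of `κ` has uncountable
cofinality. -/
theorem unc_ord {κ : Cardinal.{u}} (h0 : ℵ₀ ≤ κ) (hκ : κ ^ (ℵ₀ : Cardinal.{u}) = κ) :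
    Unc κ.ord.ToType := by
  have := Cardinal.noMaxOrder h0
  intro t ht
  by_contra! h
  have h1 : IsCofinal t := fun x => by
    obtain ⟨y, hy⟩ := exists_gt x
    obtain ⟨z, hz, hzx⟩ := h y
    exact ⟨z, hz, hy.le.trans hzx⟩
  have h2 : κ.ord.cof ≤ ℵ₀ := by
    rw [← Ordinal.cof_toType]
    exact (Order.cof_le h1).trans ht.le_aleph0
  refine (lt_power_cof_ord h0).not_ge ((power_le_power_left ?_ h2).trans hκ.le)
  exact (aleph0_pos.trans_le h0).ne'

section arith

variable {l κ : Cardinal.{u}}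

theorem lt_pow_nuC (hl : ℵ₀ ≤ l) : κ < l ^ nuC l κ :=
  csInf_mem (s := {m : Cardinal.{u} | κ < l ^ m})
    ⟨κ, (cantor κ).trans_le
      (power_le_power_right (two_le_iff_one_lt.2 (one_lt_aleph0.trans_le hl)))⟩

theorem pow_le_of_lt_nuC {θ : Cardinal.{u}} (h : θ < nuC l κ) : l ^ θ ≤ κ :=
  not_lt.1 fun h' => (csInf_le' (s := {m : Cardinal.{u} | κ < l ^ m}) h').not_gt h

theorem nuC_le (hl : ℵ₀ ≤ l) : nuC l κ ≤ κ :=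
  csInf_le' ((cantor κ).trans_le (power_le_power_right
    (two_le_iff_one_lt.2 (one_lt_aleph0.trans_le hl))))

theorem aleph0_lt_nuC (hl : ℵ₀ ≤ l) (hlκ : l ≤ κ) (hκ : κ ^ (ℵ₀ : Cardinal.{u}) = κ) :
    ℵ₀ < nuC l κ := by
  by_contra! h
  refine (lt_pow_nuC (κ := κ) hl).not_ge ?_
  calc l ^ nuC l κ ≤ l ^ (ℵ₀ : Cardinal.{u}) :=
        power_le_power_left (aleph0_pos.trans_le hl).ne' h
    _ ≤ κ ^ (ℵ₀ : Cardinal.{u}) := power_le_power_right hlκ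
    _ = κ := hκ

theorem mk_seq (hl : ℵ₀ ≤ l) :
    #(WithTop (Lex (ℕ → l.ord.ToType))) = l ^ (ℵ₀ : Cardinal.{u}) := by
  have h1 : #(Lex (ℕ → l.ord.ToType)) = l ^ (ℵ₀ : Cardinal.{u}) := by
    simp [Lex]
  have h2 : #(WithTop (Lex (ℕ → l.ord.ToType))) = #(Lex (ℕ → l.ord.ToType)) + 1 :=
    mk_option
  rw [h2, h1, add_one_of_aleph0_le]
  exact hl.trans (self_le_power l one_le_aleph0)

end arith

/-- For `μ = nuC l κ`, the lexicographic power `Q ^ μ` of the sequences `Q` in `l` serves as the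
base of the construction. -/
theorem exists_base {l κ : Cardinal.{u}} (hl : ℵ₀ ≤ l) (hlκ : l ≤ κ)
    (hκ : κ ^ (ℵ₀ : Cardinal.{u}) = κ) :
    ∃ (K : Type u) (_ : LinearOrder K) (_ : DenselyOrdered K) (_ : Nontrivial K) (E : Set K),
      GLBs K ∧ (∀ a b : K, a < b → ∃ d ∈ E, a < d ∧ d < b) ∧ #E ≤ κ ∧
      (∀ a b : K, a < b → κ < #(Ioo a b)) ∧ #K = l ^ nuC l κ := by
  have := Cardinal.noMaxOrder hl
  have hne : Nonempty l.ord.ToType := by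
    rw [← mk_ne_zero_iff, mk_ord_toType]
    exact (aleph0_pos.trans_le hl).ne'
  let : OrderBot l.ord.ToType := WellFoundedLT.toOrderBot _
  have hμ := aleph0_lt_nuC hl hlκ hκ
  have hpow : ∀ θ : Cardinal.{u}, #(WithTop (Lex (ℕ → l.ord.ToType))) ^ θ = l ^ (ℵ₀ * θ) :=
    fun θ => by rw [mk_seq hl, power_mul]
  have hIμ : #(nuC l κ).ord.ToType = nuC l κ := mk_ord_toType _
  have hIic : ∀ i : (nuC l κ).ord.ToType, #(Iic i) < nuC l κ := fun i =>
    (mk_Iic_lt i (by simp) (hIμ.symm ▸ hμ.le)).trans_eq hIμ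
  have hneI : Nonempty (nuC l κ).ord.ToType := by
    rw [← mk_ne_zero_iff, hIμ]
    exact (aleph0_pos.trans hμ).ne'
  have hIoi : ∀ i : (nuC l κ).ord.ToType, #(Ioi i) = nuC l κ := fun i => by
    have : Infinite (nuC l κ).ord.ToType := by
      rw [infinite_iff, hIμ]; exact hμ.le
    rw [← compl_Iic, mk_compl_of_infinite _ ((hIic i).trans_eq hIμ.symm), hIμ]
  have habs : ℵ₀ * nuC l κ = nuC l κ := mul_eq_right hμ.le hμ.le aleph0_ne_zero
  refine ⟨Lex ((nuC l κ).ord.ToType → WithTop (Lex (ℕ → l.ord.ToType))), inferInstance,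
    inferInstance, ?_, evBot _ _, lex_glbs withTop_glbs, evBot_dense,
    evBot_card (hl.trans hlκ) (hIμ.trans_le (nuC_le hl)) fun i => ?_,
    lt_mk_Ioo fun i => ?_, ?_⟩
  · exact inferInstanceAs (Nontrivial ((nuC l κ).ord.ToType → WithTop (Lex (ℕ → l.ord.ToType))))
  · rw [hpow]
    exact pow_le_of_lt_nuC (mul_lt_of_lt hμ.le hμ (hIic i))
  · rw [hpow, hIoi, habs]
    exact lt_pow_nuC hl
  · calc _ = #(WithTop (Lex (ℕ → l.ord.ToType))) ^ #(nuC l κ).ord.ToType := by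
          rw [power_def]; rfl
      _ = l ^ nuC l κ := by rw [hpow, hIμ, habs]

end HatCont

/-- If `λ ≤ κ` and `κ ^ ℵ₀ = κ` then there exist `2 ^ κ` incomparable linearly ordered
continua `X` with `ŵ(X) = w(X) = κ` and `|X| = λ ^ ν(λ,κ)`. -/
theorem incomparable_ordered_continua_hatweight
    (l κ : Cardinal.{u}) (hl : ℵ₀ ≤ l) (hlκ : l ≤ κ) (hκ : κ ^ (ℵ₀ : Cardinal.{u}) = κ) :
    ∃ (ι : Type u) (X : ι → TopCat.{u}),
      #ι = 2 ^ κ ∧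
      IncompFamily X ∧
      (∀ i, IsContinuum ↥(X i) ∧ IsLOTS ↥(X i) ∧
        hatWt ↥(X i) = κ ∧ wt ↥(X i) = κ ∧ #↥(X i) = l ^ nuC l κ) := by
  have h0 := hl.trans hlκ
  have := Cardinal.noMaxOrder h0
  have : Nonempty κ.ord.ToType := by
    rw [← mk_ne_zero_iff, mk_ord_toType]
    exact (aleph0_pos.trans_le h0).ne'
  let : OrderBot κ.ord.ToType := WellFoundedLT.toOrderBot _
  let : SuccOrder κ.ord.ToType := .ofLinearWellFoundedLT _
  obtain ⟨K, _, _, _, E, hK, hE, hEκ, hI, hKc⟩ := HatCont.exists_base hl hlκ hκ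
  rw [← hKc]
  exact HatCont.exists_family hκ h0 (mk_ord_toType κ) (HatCont.unc_ord h0 hκ) hK hE hEκ hI
end
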